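/- Let μ be a Borel probability measure on SL₂(ℝ) with a finite exponential moment whose support generates a Zariski dense subgroup. Then there exists a constant C > 0 such that for every t ∈ ℝ, Σ_{n≥0} (μ ⊗ μ^{*n}){ (h, g) ∈ G × G : κ(g) < t ≤ κ(hg) } ≤ C; equivalently, the measure μ̄(M_t^+) of the set M_t^+ = { g ∈ Σ : κ(Tg) < t ≤ κ(g) } is bounded uniformly in t. -/

import Mathlib

open MeasureTheory Filter

noncomputable section

abbrev SL2 := Matrix.SpecialLinearGroup (Fin 2) ℝ

abbrev PX := Projectivization ℝ (Fin 2 → ℝ)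

instance : TopologicalSpace SL2 := instTopologicalSpaceSubtype
instance : TopologicalSpace PX := instTopologicalSpaceQuotient
instance : MeasurableSpace SL2 := borel _
instance : MeasurableSpace PX := borel _

/-- Euclidean norm on ℝ². -/
def enorm2 (v : Fin 2 → ℝ) : ℝ := Real.sqrt (v 0 ^ 2 + v 1 ^ 2)

/-- Operator norm of g ∈ SL₂(ℝ) w.r.t. the Euclidean norm on ℝ². -/
def opNorm (g : SL2) : ℝ :=
  ‖Matrix.toEuclideanCLM (𝕜 := ℝ) (n := Fin 2) (g : Matrix (Fin 2) (Fin 2) ℝ)‖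

/-- Cartan projection κ(g) = log ‖g‖. -/
def kappa (g : SL2) : ℝ := Real.log (opNorm g)

/-- The projective action of SL₂(ℝ) on ℙ(ℝ²). -/
def act (g : SL2) (x : PX) : PX :=
  Projectivization.map ((Matrix.SpecialLinearGroup.toLin' g).toLinearMap)
    (LinearEquiv.injective _) x

/-- The norm cocycle σ(g, ℝv) = log (‖gv‖/‖v‖). -/
def cocycle (g : SL2) (x : PX) : ℝ :=
  Real.log (enorm2 ((g : Matrix (Fin 2) (Fin 2) ℝ).mulVec x.rep) / enorm2 x.rep)

/-- The sine distance d(ℝv, ℝw) = |det(v,w)|/(‖v‖‖w‖) on ℙ(ℝ²). -/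
def projDist (x y : PX) : ℝ :=
  |x.rep 0 * y.rep 1 - x.rep 1 * y.rep 0| / (enorm2 x.rep * enorm2 y.rep)

/-- An angle θ(x) ∈ ℝ representing x = ℝ(cos θ, sin θ). -/
def pangle (x : PX) : ℝ := Complex.arg (x.rep 0 + x.rep 1 * Complex.I)

/-- The (topological) support of a measure. -/
def measSupp (μ : Measure SL2) : Set SL2 :=
  {g | ∀ U : Set SL2, IsOpen U → g ∈ U → 0 < μ U}

/-- μ has a finite exponential moment. -/
def HasExpMoment (μ : Measure SL2) : Prop :=
  ∃ ε₁ > (0 : ℝ), ∫⁻ g, ENNReal.ofReal (opNorm g ^ ε₁) ∂μ < ⊤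

/-- The group generated by the support of μ is Zariski dense in SL₂(ℝ),
equivalently it is not solvable. -/
def ZariskiDense (μ : Measure SL2) : Prop :=
  ¬ IsSolvable (Subgroup.closure (measSupp μ))

/-- ν is μ-stationary: μ ∗ ν = ν. -/
def IsStationaryMeasure (μ : Measure SL2) (ν : Measure PX) : Prop :=
  μ.bind (fun g => ν.map (act g)) = ν

/-- The product g₁ ⋯ gₙ of a word (g₁, …, gₙ). -/
def word {n : ℕ} (g : Fin n → SL2) : SL2 := (List.ofFn g).prod

/-- The product measure μ^{⊗n} on words of length n. -/
def μpi (μ : Measure SL2) (n : ℕ) : Measure (Fin n → SL2) := Measure.pi fun _ => μ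

open scoped ComplexConjugate ENNReal Topology Pointwise

/-!
Identify the projective line with the unit circle by `±v ↦ v²`; then `log ‖denom g z‖` is the norm
cocycle. The group element `g` changes a regularised logarithmic energy of a probability measure `ν`
on the circle by an amount tending to `2 ∫ log ‖denom g z‖ dν`. If `ν` is stationary, the mean
change is a positive combination of the variances of the Fourier moments of `g • ν`, and these all
vanish only if `ν` is invariant, which is impossible for a non-solvable group. So the cocycle has
positive drift against every stationary measure.

By Hahn–Banach and Riesz duality, adding the coboundary of some continuous `A` makes the mean of
the cocycle uniformly positive, and by the exponential moment `exp (-δ * ·)` of the twisted cocycle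
contracts in mean. For `t ≤ kappa x` this yields a supersolution, bounded at `x` and at least `1` on
`{kappa < t}`, which controls the expected number of passages of the level `t` after a visit to `x`.
A maximum principle extends the bound to all starting points at the cost of one extra passage.
-/

instance : BorelSpace SL2 := ⟨rfl⟩
instance : IsTopologicalGroup SL2 := Matrix.SpecialLinearGroup.topologicalGroup
instance : SecondCountableTopology SL2 :=
  haveI : SecondCountableTopology (Matrix (Fin 2) (Fin 2) ℝ) :=
    inferInstanceAs (SecondCountableTopology (Fin 2 → Fin 2 → ℝ))
  TopologicalSpace.Subtype.secondCountableTopology _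

instance : MeasurableSpace Circle := borel Circle
instance : BorelSpace Circle := ⟨rfl⟩

section ConformalParts

/-- The `ℂ`-linear part of a real `2 × 2` matrix acting on `ℂ = ℝ²`, that is the `α` in
`M v = α v + β (conj v)`. -/
def linPart : Matrix (Fin 2) (Fin 2) ℝ →ₗ[ℝ] ℂ where
  toFun M := ⟨(M 0 0 + M 1 1) / 2, (M 1 0 - M 0 1) / 2⟩
  map_add' M N := by apply Complex.ext <;> simp <;> ring
  map_smul' c M := by apply Complex.ext <;> simp <;> ring

/-- The `ℂ`-antilinear part of a real `2 × 2` matrix acting on `ℂ = ℝ²`, that is the `β` in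
`M v = α v + β (conj v)`. -/
def conjPart : Matrix (Fin 2) (Fin 2) ℝ →ₗ[ℝ] ℂ where
  toFun M := ⟨(M 0 0 - M 1 1) / 2, (M 1 0 + M 0 1) / 2⟩
  map_add' M N := by apply Complex.ext <;> simp <;> ring
  map_smul' c M := by apply Complex.ext <;> simp <;> ring

variable (M N : Matrix (Fin 2) (Fin 2) ℝ)

lemma linPart_re : (linPart M).re = (M 0 0 + M 1 1) / 2 := rfl
lemma linPart_im : (linPart M).im = (M 1 0 - M 0 1) / 2 := rfl
lemma conjPart_re : (conjPart M).re = (M 0 0 - M 1 1) / 2 := rfl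
lemma conjPart_im : (conjPart M).im = (M 1 0 + M 0 1) / 2 := rfl

@[simp] lemma linPart_one : linPart 1 = 1 := by
  apply Complex.ext <;> simp [linPart_re, linPart_im]

@[simp] lemma conjPart_one : conjPart 1 = 0 := by
  apply Complex.ext <;> simp [conjPart_re, conjPart_im]

lemma linPart_mul :
    linPart (M * N) = linPart M * linPart N + conjPart M * conj (conjPart N) := by
  apply Complex.ext <;>
    simp [linPart_re, linPart_im, conjPart_re, conjPart_im, Matrix.mul_apply,
      Fin.sum_univ_two] <;> ring

lemma conjPart_mul :
    conjPart (M * N) = linPart M * conjPart N + conjPart M * conj (linPart N) := by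
  apply Complex.ext <;>
    simp [linPart_re, linPart_im, conjPart_re, conjPart_im, Matrix.mul_apply,
      Fin.sum_univ_two] <;> ring

lemma trace_eq_two_mul_linPart_re : M.trace = 2 * (linPart M).re := by
  rw [Matrix.trace_fin_two, linPart_re]; ring

lemma det_eq_normSq_sub_normSq :
    M.det = Complex.normSq (linPart M) - Complex.normSq (conjPart M) := by
  simp only [Matrix.det_fin_two, Complex.normSq_apply, linPart_re, linPart_im, conjPart_re,
    conjPart_im]
  ring

variable {M N} in
lemma eq_of_linPart_eq_of_conjPart_eq (hl : linPart M = linPart N)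
    (hc : conjPart M = conjPart N) : M = N := by
  have h₁ := congrArg Complex.re hl
  have h₂ := congrArg Complex.im hl
  have h₃ := congrArg Complex.re hc
  have h₄ := congrArg Complex.im hc
  simp only [linPart_re, linPart_im, conjPart_re, conjPart_im] at h₁ h₂ h₃ h₄
  ext i j
  fin_cases i <;> fin_cases j <;> simp only [Fin.zero_eta, Fin.mk_one] <;> linarith

@[fun_prop] lemma continuous_linPart : Continuous linPart :=
  linPart.continuous_of_finiteDimensional

@[fun_prop] lemma continuous_conjPart : Continuous conjPart :=
  conjPart.continuous_of_finiteDimensional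

lemma toEuclideanCLM_repr (v : ℂ) :
    Matrix.toEuclideanCLM (𝕜 := ℝ) (n := Fin 2) M (Complex.orthonormalBasisOneI.repr v) =
      Complex.orthonormalBasisOneI.repr (linPart M * v + conjPart M * conj v) := by
  ext i
  fin_cases i <;>
    simp [linPart_re, linPart_im, conjPart_re, conjPart_im, Matrix.mulVec, dotProduct] <;>
    ring

lemma exists_circle_norm_mul_add (a b : ℂ) : ∃ z : Circle, ‖a * z + b‖ = ‖a‖ + ‖b‖ := by
  refine ⟨Circle.exp (b.arg - a.arg), ?_⟩
  have ha : a * Circle.exp (b.arg - a.arg) = ‖a‖ * Complex.exp (b.arg * Complex.I) := by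
    nth_rw 1 [← Complex.norm_mul_exp_arg_mul_I a]
    rw [Circle.coe_exp, mul_assoc, ← Complex.exp_add]
    push_cast
    ring_nf
  have hab : a * Circle.exp (b.arg - a.arg) + b =
      ((‖a‖ + ‖b‖ : ℝ) : ℂ) * Complex.exp (b.arg * Complex.I) := by
    rw [ha, Complex.ofReal_add, add_mul, Complex.norm_mul_exp_arg_mul_I b]
  rw [hab, norm_mul, Complex.norm_exp_ofReal_mul_I, mul_one, Complex.norm_real,
    Real.norm_of_nonneg (by positivity)]

lemma norm_toEuclideanCLM :
    ‖Matrix.toEuclideanCLM (𝕜 := ℝ) (n := Fin 2) M‖ = ‖linPart M‖ + ‖conjPart M‖ := by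
  apply le_antisymm
  · refine ContinuousLinearMap.opNorm_le_bound _ (by positivity) fun w ↦ ?_
    obtain ⟨v, rfl⟩ := Complex.orthonormalBasisOneI.repr.surjective w
    rw [toEuclideanCLM_repr, LinearIsometryEquiv.norm_map, LinearIsometryEquiv.norm_map]
    calc _ ≤ ‖linPart M * v‖ + ‖conjPart M * conj v‖ := norm_add_le _ _
      _ = _ := by rw [norm_mul, norm_mul, RCLike.norm_conj, add_mul]
  · obtain ⟨z, hz⟩ := exists_circle_norm_mul_add (linPart M) (conjPart M)
    obtain ⟨v, hv⟩ : ∃ v : Circle, v * v = z :=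
      ⟨Circle.exp ((z : ℂ).arg / 2), by rw [← Circle.exp_add, add_halves, Circle.exp_arg]⟩
    have hMv : linPart M * v + conjPart M * conj (v : ℂ) =
        (linPart M * z + conjPart M) * (v⁻¹ : Circle) := by
      rw [← hv, ← Circle.coe_inv_eq_conj, Circle.coe_mul, add_mul, mul_assoc, mul_assoc (v : ℂ),
        Circle.coe_inv, mul_inv_cancel₀ v.coe_ne_zero, mul_one]
    have := (Matrix.toEuclideanCLM (𝕜 := ℝ) (n := Fin 2) M).le_opNorm
      (Complex.orthonormalBasisOneI.repr v)
    rwa [toEuclideanCLM_repr, LinearIsometryEquiv.norm_map, LinearIsometryEquiv.norm_map, hMv,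
      norm_mul, Circle.norm_coe, Circle.norm_coe, mul_one, mul_one, hz] at this

end ConformalParts

section Action

/-- The denominator `β̄ z + ᾱ` of the Möbius transformation `z ↦ (α z + β) / (β̄ z + ᾱ)` of the
circle attached to `g = (v ↦ α v + β v̄)`. If `z = v ^ 2`, then `‖denom g z‖ = ‖g v‖`. -/
def denom (g : SL2) (z : Circle) : ℂ := conj (conjPart g) * z + conj (linPart g)

lemma opNorm_eq (g : SL2) : opNorm g = ‖linPart g‖ + ‖conjPart g‖ := norm_toEuclideanCLM _

lemma opNorm_inv (g : SL2) : opNorm g⁻¹ = opNorm g := by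
  have hlin : linPart (g⁻¹ : SL2).1 = conj (linPart g.1) := by
    apply Complex.ext <;>
      simp [linPart_re, linPart_im, Matrix.SpecialLinearGroup.coe_inv, Matrix.adjugate_fin_two] <;>
      ring
  have hconj : conjPart (g⁻¹ : SL2).1 = -conjPart g.1 := by
    apply Complex.ext <;>
      simp [conjPart_re, conjPart_im, Matrix.SpecialLinearGroup.coe_inv,
        Matrix.adjugate_fin_two] <;>
      ring
  rw [opNorm_eq, opNorm_eq, hlin, hconj, RCLike.norm_conj, norm_neg]

lemma normSq_linPart_sub_normSq_conjPart (g : SL2) :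
    Complex.normSq (linPart g) - Complex.normSq (conjPart g) = 1 := by
  rw [← det_eq_normSq_sub_normSq, g.det_coe]

lemma opNorm_mul_norm_sub_norm (g : SL2) :
    opNorm g * (‖linPart g‖ - ‖conjPart g‖) = 1 := by
  have h := normSq_linPart_sub_normSq_conjPart g
  rw [Complex.normSq_eq_norm_sq, Complex.normSq_eq_norm_sq] at h
  rw [opNorm_eq]
  linarith

lemma opNorm_pos (g : SL2) : 0 < opNorm g :=
  (norm_nonneg _).lt_of_ne fun h ↦ by simpa [opNorm, ← h] using opNorm_mul_norm_sub_norm g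

lemma inv_opNorm (g : SL2) : (opNorm g)⁻¹ = ‖linPart g‖ - ‖conjPart g‖ :=
  inv_eq_of_mul_eq_one_right (opNorm_mul_norm_sub_norm g)

lemma one_le_opNorm (g : SL2) : 1 ≤ opNorm g := by
  have h := opNorm_mul_norm_sub_norm g
  rw [opNorm_eq] at h ⊢
  nlinarith [norm_nonneg (linPart g), norm_nonneg (conjPart g)]

lemma norm_denom_le (g : SL2) (z : Circle) : ‖denom g z‖ ≤ opNorm g := by
  refine (norm_add_le _ _).trans_eq ?_
  rw [norm_mul, Circle.norm_coe, mul_one, RCLike.norm_conj, RCLike.norm_conj, opNorm_eq, add_comm]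

lemma inv_opNorm_le_norm_denom (g : SL2) (z : Circle) : (opNorm g)⁻¹ ≤ ‖denom g z‖ := by
  have h := norm_sub_le_norm_add (conj (linPart g)) (conj (conjPart g) * z)
  rwa [norm_mul, Circle.norm_coe, mul_one, RCLike.norm_conj, RCLike.norm_conj, add_comm,
    ← inv_opNorm] at h

lemma norm_denom_pos (g : SL2) (z : Circle) : 0 < ‖denom g z‖ :=
  (inv_pos.2 (opNorm_pos g)).trans_le (inv_opNorm_le_norm_denom g z)

lemma denom_ne_zero (g : SL2) (z : Circle) : denom g z ≠ 0 :=
  norm_pos_iff.1 (norm_denom_pos g z)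

lemma exists_norm_denom_eq_opNorm (g : SL2) : ∃ z, ‖denom g z‖ = opNorm g := by
  obtain ⟨z, hz⟩ := exists_circle_norm_mul_add (conj (conjPart g)) (conj (linPart g))
  exact ⟨z, by rw [denom, hz, RCLike.norm_conj, RCLike.norm_conj, opNorm_eq, add_comm]⟩

lemma kappa_nonneg (g : SL2) : 0 ≤ kappa g := Real.log_nonneg (one_le_opNorm g)

lemma abs_log_norm_denom_le (g : SL2) (z : Circle) : |Real.log ‖denom g z‖| ≤ kappa g := by
  refine abs_le.2 ⟨?_, Real.log_le_log (norm_denom_pos g z) (norm_denom_le g z)⟩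
  rw [kappa, ← Real.log_inv]
  exact Real.log_le_log (inv_pos.2 (opNorm_pos g)) (inv_opNorm_le_norm_denom g z)

@[simp] lemma denom_one (z : Circle) : denom 1 z = 1 := by
  simp [denom]

/-- The action of `SL2` on the lines of `ℂ = ℝ²`, the line through a unit vector `v` being encoded
by `v ^ 2`. -/
instance : SMul SL2 Circle where
  smul g z := z * Circle.ofConjDivSelf (denom g z) (denom_ne_zero g z)

lemma coe_smul_eq_mul_div (g : SL2) (z : Circle) :
    ((g • z : Circle) : ℂ) = z * (conj (denom g z) / denom g z) := rfl

lemma coe_mul_conj_denom (g : SL2) (z : Circle) :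
    z * conj (denom g z) = linPart g * z + conjPart g := by
  rw [denom, map_add, map_mul, Complex.conj_conj, Complex.conj_conj, ← Circle.coe_inv_eq_conj,
    Circle.coe_inv]
  field_simp [z.coe_ne_zero]
  ring

lemma coe_smul (g : SL2) (z : Circle) :
    ((g • z : Circle) : ℂ) = (linPart g * z + conjPart g) / denom g z := by
  rw [coe_smul_eq_mul_div, ← mul_div_assoc, coe_mul_conj_denom]

lemma coe_smul_mul_denom (g : SL2) (z : Circle) :
    (g • z : Circle) * denom g z = linPart g * z + conjPart g := by
  rw [coe_smul, div_mul_cancel₀ _ (denom_ne_zero g z)]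

lemma denom_mul (g h : SL2) (z : Circle) : denom (g * h) z = denom g (h • z) * denom h z := by
  rw [denom, denom, add_mul, mul_assoc, coe_smul_mul_denom, Matrix.SpecialLinearGroup.coe_mul,
    linPart_mul, conjPart_mul, denom]
  simp only [map_add, map_mul, Complex.conj_conj]
  ring

lemma log_norm_denom_mul (g h : SL2) (z : Circle) :
    Real.log ‖denom (g * h) z‖ = Real.log ‖denom g (h • z)‖ + Real.log ‖denom h z‖ := by
  rw [denom_mul, norm_mul, Real.log_mul (norm_denom_pos _ _).ne' (norm_denom_pos _ _).ne']

instance : MulAction SL2 Circle where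
  one_smul z := Circle.ext <| by simp [coe_smul_eq_mul_div]
  mul_smul g h z := Circle.ext <| by
    rw [coe_smul_eq_mul_div, denom_mul, coe_smul_eq_mul_div, coe_smul_eq_mul_div, map_mul,
      mul_div_mul_comm]
    ring

lemma continuous_denom : Continuous fun p : SL2 × Circle ↦ denom p.1 p.2 := by
  have : Continuous fun p : SL2 × Circle ↦ (p.1 : Matrix (Fin 2) (Fin 2) ℝ) :=
    continuous_subtype_val.comp continuous_fst
  unfold denom
  fun_prop

instance : ContinuousSMul SL2 Circle where
  continuous_smul := by
    refine Continuous.subtype_mk ?_ _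
    have h := continuous_denom
    have hz : Continuous fun p : SL2 × Circle ↦ (p.2 : ℂ) :=
      continuous_subtype_val.comp continuous_snd
    exact hz.mul ((Complex.continuous_conj.comp h).div h fun p ↦ denom_ne_zero p.1 p.2)

lemma continuous_log_norm_denom :
    Continuous fun p : SL2 × Circle ↦ Real.log ‖denom p.1 p.2‖ :=
  continuous_denom.norm.log fun p ↦ (norm_denom_pos p.1 p.2).ne'

lemma continuous_opNorm : Continuous opNorm := by
  have : Continuous fun g : SL2 ↦ (g : Matrix (Fin 2) (Fin 2) ℝ) := continuous_subtype_val
  simp_rw [funext opNorm_eq]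
  fun_prop

lemma continuous_kappa : Continuous kappa := continuous_opNorm.log fun g ↦ (opNorm_pos g).ne'

lemma norm_smul_sub_smul_mul (g : SL2) (z w : Circle) :
    ‖((g • z : Circle) : ℂ) - (g • w : Circle)‖ * (‖denom g z‖ * ‖denom g w‖) =
      ‖(z : ℂ) - w‖ := by
  have h : (((g • z : Circle) : ℂ) - (g • w : Circle)) * (denom g z * denom g w) = z - w := by
    have hdet := congrArg Complex.ofReal (normSq_linPart_sub_normSq_conjPart g)
    rw [Complex.ofReal_sub, ← Complex.mul_conj, ← Complex.mul_conj, Complex.ofReal_one] at hdet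
    calc _ = (g • z : Circle) * denom g z * denom g w -
          (g • w : Circle) * denom g w * denom g z := by ring
      _ = (linPart g * conj (linPart g) - conjPart g * conj (conjPart g)) * (z - w) := by
          rw [coe_smul_mul_denom, coe_smul_mul_denom, denom, denom]; ring
      _ = z - w := by rw [hdet, one_mul]
  rw [← norm_mul, ← norm_mul, h]

end Action

section FixedPoints

lemma smul_eq_self_iff (g : SL2) (z : Circle) : g • z = z ↔ (denom g z).im = 0 := by
  rw [← Circle.coe_inj, coe_smul_eq_mul_div, mul_eq_left₀ z.coe_ne_zero,
    div_eq_one_iff_eq (denom_ne_zero g z), Complex.conj_eq_iff_im]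

lemma mul_eq_of_smul_eq_self {h : SL2} (hh : conjPart h ≠ 0) {z w : Circle} (hz : h • z = z)
    (hw : h • w = w) (hzw : z ≠ w) : (z * w : ℂ) = -conjPart h / conj (conjPart h) := by
  have quadratic {v : Circle} (hv : h • v = v) :
      v * (conj (conjPart h) * v + conj (linPart h)) = linPart h * v + conjPart h := by
    simpa only [hv, denom] using coe_smul_mul_denom h v
  have hsub : (z - w : ℂ) ≠ 0 := sub_ne_zero.2 (Circle.coe_injective.ne hzw)
  rw [eq_div_iff ((map_ne_zero _).2 hh)]
  refine mul_left_cancel₀ hsub ?_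
  linear_combination w * quadratic hz - z * quadratic hw

lemma encard_fixedBy_le_two {h : SL2} (hh : conjPart h ≠ 0) :
    (MulAction.fixedBy Circle h).encard ≤ 2 := by
  by_contra! hlt
  obtain ⟨t, ht, hcard⟩ := Set.exists_subset_encard_eq (Order.add_one_le_of_lt hlt)
  obtain ⟨z, w, v, hzw, hzv, hwv, rfl⟩ := Set.encard_eq_three.1 (hcard.trans two_add_one_eq_three)
  have hz : h • z = z := ht (by simp)
  have hmul : (z * w : ℂ) = z * v :=
    (mul_eq_of_smul_eq_self hh hz (ht (by simp)) hzw).trans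
      (mul_eq_of_smul_eq_self hh hz (ht (by simp)) hzv).symm
  exact hwv (Circle.ext (mul_left_cancel₀ z.coe_ne_zero hmul))

end FixedPoints

section Recurrence

lemma abs_sub_le_of_linear_recurrence {τ : ℝ} (hτ : 2 ≤ |τ|) {u : ℕ → ℝ} (h₀ : u 0 = 0)
    (hu : ∀ n, u (n + 2) = τ * u (n + 1) - u n) (n : ℕ) : |u 1| ≤ |u (n + 1)| - |u n| := by
  induction n with
  | zero => simp [h₀]
  | succ n ih =>
    have h₁ : |τ| * |u (n + 1)| - |u n| ≤ |u (n + 2)| := by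
      rw [hu, ← abs_mul]
      exact abs_sub_abs_le_abs_sub _ _
    nlinarith [abs_nonneg (u (n + 1))]

lemma mul_abs_le_of_linear_recurrence {τ : ℝ} (hτ : 2 ≤ |τ|) {u : ℕ → ℝ} (h₀ : u 0 = 0)
    (hu : ∀ n, u (n + 2) = τ * u (n + 1) - u n) (n : ℕ) : n * |u 1| ≤ |u n| := by
  induction n with
  | zero => simp
  | succ n ih =>
    have := abs_sub_le_of_linear_recurrence hτ h₀ hu n
    push_cast
    linarith

lemma mul_self_eq_trace_smul_sub_one (h : SL2) :
    (h * h : Matrix (Fin 2) (Fin 2) ℝ) = h.1.trace • (h : Matrix (Fin 2) (Fin 2) ℝ) - 1 := by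
  have hch := Matrix.aeval_self_charpoly (h : Matrix (Fin 2) (Fin 2) ℝ)
  rw [Matrix.charpoly_fin_two, h.det_coe] at hch
  simp only [map_add, map_sub, map_mul, Polynomial.aeval_X, Polynomial.aeval_C,
    map_one, Algebra.algebraMap_eq_smul_one, smul_mul_assoc, one_mul, pow_two] at hch
  rw [eq_sub_iff_add_eq, ← sub_eq_zero, ← hch]
  abel

lemma denom_mul_self (h : SL2) (z : Circle) :
    denom (h * h) z = h.1.trace * denom h z - 1 := by
  have hlin := congrArg linPart (mul_self_eq_trace_smul_sub_one h)
  have hconj := congrArg conjPart (mul_self_eq_trace_smul_sub_one h)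
  simp only [map_sub, map_smul, linPart_one, conjPart_one, Complex.real_smul] at hlin hconj
  rw [denom, Matrix.SpecialLinearGroup.coe_mul, hlin, hconj, denom]
  simp only [map_sub, map_mul, Complex.conj_ofReal, map_one, map_zero]
  ring

lemma denom_smul_self (h : SL2) (z : Circle) :
    denom h (h • z) = h.1.trace - (denom h z)⁻¹ := by
  have := denom_mul_self h z
  rw [denom_mul] at this
  field_simp [denom_ne_zero h z]
  linear_combination this

lemma im_denom_pow_smul (h : SL2) (z : Circle) (n : ℕ) :
    (denom h (h ^ n • z)).im = (denom h z).im / Complex.normSq (denom (h ^ n) z) := by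
  induction n with
  | zero => simp
  | succ n ih =>
    rw [pow_succ', mul_smul, denom_smul_self, Complex.sub_im, Complex.ofReal_im, Complex.inv_im,
      ih, denom_mul, map_mul]
    field_simp
    ring

lemma denom_pow_add_two (h : SL2) (z : Circle) (n : ℕ) :
    denom (h ^ (n + 2)) z = h.1.trace * denom (h ^ (n + 1)) z - denom (h ^ n) z := by
  rw [pow_succ', pow_succ', ← mul_assoc, denom_mul, denom_mul_self, denom_mul]
  ring

lemma tendsto_im_denom_pow_smul {h : SL2} (hh : 2 ≤ |h.1.trace|) (z : Circle) :
    Tendsto (fun n ↦ (denom h (h ^ n • z)).im) atTop (𝓝 0) := by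
  rcases eq_or_ne (denom h z).im 0 with him | him
  · simp [im_denom_pow_smul, him]
  have hgrowth (n : ℕ) : n * |(denom h z).im| ≤ ‖denom (h ^ n) z‖ := by
    have := mul_abs_le_of_linear_recurrence hh (u := fun n ↦ (denom (h ^ n) z).im) (by simp)
      (fun n ↦ by simp [denom_pow_add_two]) n
    simp only [pow_one] at this
    exact this.trans (Complex.abs_im_le_norm _)
  have hnorm : Tendsto (fun n ↦ ‖denom (h ^ n) z‖) atTop atTop :=
    tendsto_atTop_mono hgrowth
      (tendsto_natCast_atTop_atTop.atTop_mul_const (abs_pos.2 him))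
  simp_rw [im_denom_pow_smul, Complex.normSq_eq_norm_sq]
  exact tendsto_const_nhds.div_atTop ((tendsto_pow_atTop two_ne_zero).comp hnorm)

lemma ae_smul_eq_self_of_measurePreserving {h : SL2} (hh : 2 ≤ |h.1.trace|) {ν : Measure Circle}
    [IsFiniteMeasure ν] (hν : MeasurePreserving (h • · : Circle → Circle) ν ν) :
    ∀ᵐ z ∂ν, h • z = z := by
  filter_upwards [hν.conservative.ae_frequently_mem_of_mem_nhds] with z hz
  rw [smul_eq_self_iff]
  by_contra him
  have hcont : Continuous fun w ↦ |(denom h w).im| :=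
    (Complex.continuous_im.comp (continuous_denom.comp (Continuous.prodMk_right h))).abs
  have hfar : {w | |(denom h z).im| / 2 < |(denom h w).im|} ∈ 𝓝 z :=
    hcont.continuousAt.eventually_const_lt (half_lt_self (abs_pos.2 him))
  have hnear := (tendsto_im_denom_pow_smul hh z).abs.eventually_lt_const
    (by simpa using him : |(0 : ℝ)| < |(denom h z).im| / 2)
  obtain ⟨n, hn, hn'⟩ := ((hz _ hfar).and_eventually hnear).exists
  rw [smul_iterate] at hn
  exact (lt_asymm hn hn')

end Recurrence

section Solvability

lemma isSolvable_of_commute_ker {G C : Type*} [Group G] [CommGroup C] (f : G →* C)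
    (hf : ∀ a ∈ f.ker, ∀ b ∈ f.ker, a * b = b * a) : Group.IsSolvable G :=
  have : Group.IsSolvable f.ker :=
    Group.isSolvable_of_comm fun a b ↦ Subtype.ext (hf a a.2 b b.2)
  Group.isSolvable_of_ker_le_range f.ker.subtype f f.ker.range_subtype.ge

lemma isSolvable_stabilizer_of_encard_le_two {G α : Type*} [Group G] [MulAction G α] {A : Set α}
    (hA : A.encard ≤ 2) {a : α} (ha : a ∈ A) [Group.IsSolvable (MulAction.stabilizer G a)] :
    Group.IsSolvable (MulAction.stabilizer G A) := by
  obtain ⟨hfin, hcard⟩ := Set.encard_le_coe_iff_finite_ncard_le.1 hA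
  have : Finite A := hfin
  have : IsMulCommutative (Equiv.Perm A) := Equiv.Perm.isMulCommutative_iff_card_le_two.2 hcard
  have : Group.IsSolvable (Equiv.Perm A) := Group.isSolvable_of_comm mul_comm'
  let f := MulAction.toPermHom (MulAction.stabilizer G A) A
  have hker (g : f.ker) : (g : MulAction.stabilizer G A).1 ∈ MulAction.stabilizer G a :=
    congrArg Subtype.val (DFunLike.congr_fun (MonoidHom.mem_ker.1 g.2) (⟨a, ha⟩ : A))
  let ι : f.ker →* MulAction.stabilizer G a :=
    ((Subgroup.subtype _).comp f.ker.subtype).codRestrict _ hker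
  have : Group.IsSolvable f.ker := Group.isSolvable_of_isSolvable_injective (f := ι)
    fun _ _ h ↦ Subtype.ext <| Subtype.ext <|
      congrArg (fun g : MulAction.stabilizer G a ↦ (g : G)) h
  exact Group.isSolvable_of_ker_le_range f.ker.subtype f f.ker.range_subtype.ge

lemma exists_re_eq_zero_of_denom_eq_one {g : SL2} {z : Circle} (hg : denom g z = 1) :
    ∃ x : ℂ, conj x = -x ∧ linPart g = 1 - x ∧ conjPart g = x * z := by
  have hz : (z : ℂ) * conj (z : ℂ) = 1 := by rw [Complex.mul_conj, Circle.normSq_coe]; simp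
  have hlin : linPart g = 1 - conjPart g * conj (z : ℂ) := by
    have := congrArg conj hg
    rw [denom, map_add, map_mul, Complex.conj_conj, Complex.conj_conj, map_one] at this
    exact eq_sub_of_add_eq' this
  refine ⟨conjPart g * conj (z : ℂ), ?_, hlin, by rw [mul_assoc, mul_comm (conj _), hz, mul_one]⟩
  have hdet := congrArg Complex.ofReal (normSq_linPart_sub_normSq_conjPart g)
  rw [Complex.ofReal_sub, ← Complex.mul_conj, ← Complex.mul_conj, Complex.ofReal_one, hlin] at hdet
  simp only [map_sub, map_mul, map_one, Complex.conj_conj] at hdet ⊢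
  linear_combination -hdet + conjPart g * conj (conjPart g) * hz

lemma mul_comm_of_denom_eq_one {a b : SL2} {z : Circle} (ha : denom a z = 1)
    (hb : denom b z = 1) : a * b = b * a := by
  obtain ⟨x, hx, hax, hax'⟩ := exists_re_eq_zero_of_denom_eq_one ha
  obtain ⟨y, hy, hby, hby'⟩ := exists_re_eq_zero_of_denom_eq_one hb
  refine Subtype.ext (eq_of_linPart_eq_of_conjPart_eq ?_ ?_)
  · simp only [Matrix.SpecialLinearGroup.coe_mul, linPart_mul, hax, hby, hax', hby', map_mul, hx,
      hy]
    ring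
  · simp only [Matrix.SpecialLinearGroup.coe_mul, conjPart_mul, hax, hby, hax', hby', map_sub,
      map_one, hx, hy]
    ring

instance isSolvable_stabilizer_circle (z : Circle) :
    Group.IsSolvable (MulAction.stabilizer SL2 z) := by
  let χ : MulAction.stabilizer SL2 z →* ℂ :=
    { toFun := fun g ↦ denom g z
      map_one' := denom_one z
      map_mul' := fun g h ↦ by
        rw [Subgroup.coe_mul, denom_mul, MulAction.mem_stabilizer_iff.1 h.2] }
  refine isSolvable_of_commute_ker χ.toHomUnits fun a ha b hb ↦
    Subtype.ext (mul_comm_of_denom_eq_one (z := z) ?_ ?_)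
  exacts [congrArg Units.val ha, congrArg Units.val hb]

lemma trace_commutator (a b : SL2) :
    (a * b * a⁻¹ * b⁻¹ : SL2).1.trace = 2 - (a * b - b * a : Matrix (Fin 2) (Fin 2) ℝ).det := by
  have hdet (c : SL2) : (c.1 - 1).det = 2 - c.1.trace := by
    have := c.det_coe
    rw [Matrix.det_fin_two] at this ⊢
    simp only [Matrix.sub_apply, Matrix.one_apply_eq, Matrix.trace_fin_two, ne_eq, zero_ne_one,
      one_ne_zero, not_false_eq_true, Matrix.one_apply_ne, sub_zero]
    linear_combination this
  have hmul : (a * b * a⁻¹ * b⁻¹ : SL2).1 * (b * a : SL2).1 = (a * b : SL2).1 :=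
    congrArg Subtype.val (by group : a * b * a⁻¹ * b⁻¹ * (b * a) = a * b)
  have hfactor : (a * b - b * a : Matrix (Fin 2) (Fin 2) ℝ) =
      ((a * b * a⁻¹ * b⁻¹ : SL2).1 - 1) * (b * a : SL2).1 := by
    rw [sub_mul, one_mul, hmul, Matrix.SpecialLinearGroup.coe_mul,
      Matrix.SpecialLinearGroup.coe_mul]
  rw [hfactor, Matrix.det_mul, hdet, Matrix.SpecialLinearGroup.det_coe]
  ring

lemma normSq_conjPart_lt_sq_im_linPart {a : SL2} (ha : |a.1.trace| < 2) :
    Complex.normSq (conjPart a) < (linPart a).im ^ 2 := by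
  have hdet := normSq_linPart_sub_normSq_conjPart a
  rw [Complex.normSq_apply (linPart a)] at hdet
  rw [trace_eq_two_mul_linPart_re, abs_lt] at ha
  nlinarith

lemma linPart_mul_sub_mul (M N : Matrix (Fin 2) (Fin 2) ℝ) :
    linPart (M * N - N * M) = (2 * (conjPart M * conj (conjPart N)).im : ℝ) * Complex.I := by
  rw [map_sub, linPart_mul, linPart_mul]
  apply Complex.ext <;> simp <;> ring

lemma conjPart_mul_sub_mul (M N : Matrix (Fin 2) (Fin 2) ℝ) :
    conjPart (M * N - N * M) =
      2 * Complex.I * ((linPart M).im * conjPart N - (linPart N).im * conjPart M) := by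
  rw [map_sub, conjPart_mul, conjPart_mul]
  apply Complex.ext <;> simp <;> ring

lemma det_commutator_neg {a b : SL2} (ha : |a.1.trace| < 2) (hab : a * b ≠ b * a) :
    (a * b - b * a : Matrix (Fin 2) (Fin 2) ℝ).det < 0 := by
  set p := (linPart a).im
  set s := (conjPart a * conj (conjPart b)).im
  set u := p * conjPart b - (linPart b).im * conjPart a
  have hlin := linPart_mul_sub_mul a.1 b.1
  have hconj : conjPart (a * b - b * a : Matrix (Fin 2) (Fin 2) ℝ) = 2 * Complex.I * u :=
    conjPart_mul_sub_mul a.1 b.1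
  have hp : Complex.normSq (conjPart a) < p ^ 2 := normSq_conjPart_lt_sq_im_linPart ha
  have hcs : (p * s) ^ 2 ≤ Complex.normSq (conjPart a) * Complex.normSq u := by
    have him : p * s = (conjPart a * conj u).im := by
      simp [s, u]
      ring
    rw [him, ← Complex.normSq_conj u, ← map_mul, Complex.normSq_apply]
    nlinarith [sq_nonneg (conjPart a * conj u).re]
  have hu : 0 < Complex.normSq u := by
    rw [Complex.normSq_pos]
    intro hu
    rw [hu, map_zero, mul_zero] at hcs
    have hs : s = 0 := (mul_eq_zero.1 (sq_nonpos_iff _ |>.1 hcs)).resolve_left fun hp₀ ↦ by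
      nlinarith [Complex.normSq_nonneg (conjPart a)]
    refine hab (Subtype.ext (sub_eq_zero.1 (eq_of_linPart_eq_of_conjPart_eq (N := 0) ?_ ?_)))
    · exact hlin.trans (by simp [s, hs])
    · exact hconj.trans (by simp [hu])
  rw [det_eq_normSq_sub_normSq, hlin, hconj]
  simp only [map_mul, Complex.normSq_ofReal, Complex.normSq_I, Complex.normSq_ofNat]
  nlinarith

lemma conjPart_ne_zero_of_two_le_abs_trace {a b : SL2} (ha : 2 ≤ |a.1.trace|)
    (hab : a * b ≠ b * a) : conjPart a ≠ 0 := by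
  intro h
  have hdet := normSq_linPart_sub_normSq_conjPart a
  rw [h, map_zero, sub_zero, Complex.normSq_apply] at hdet
  have hre : 1 ≤ |(linPart a).re| := by
    rw [trace_eq_two_mul_linPart_re, abs_mul, abs_two] at ha
    linarith
  have him : conj (linPart a) = linPart a :=
    Complex.conj_eq_iff_im.2 (by nlinarith [sq_abs (linPart a).re])
  refine hab (Subtype.ext (eq_of_linPart_eq_of_conjPart_eq ?_ ?_))
  · simp only [Matrix.SpecialLinearGroup.coe_mul, linPart_mul, h, map_zero]
    ring
  · simp only [Matrix.SpecialLinearGroup.coe_mul, conjPart_mul, h, him]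
    ring

lemma conjPart_ne_zero_of_two_lt_trace {a : SL2} (ha : 2 < a.1.trace) : conjPart a ≠ 0 := by
  intro h
  have hdet := normSq_linPart_sub_normSq_conjPart a
  rw [h, map_zero, sub_zero, Complex.normSq_apply] at hdet
  rw [trace_eq_two_mul_linPart_re] at ha
  nlinarith [sq_nonneg (linPart a).im]

lemma exists_two_le_abs_trace_of_not_isSolvable {H : Subgroup SL2} (hH : ¬ Group.IsSolvable H) :
    ∃ h ∈ H, 2 ≤ |h.1.trace| ∧ conjPart h ≠ 0 := by
  obtain ⟨a, b, hab⟩ : ∃ a b : H, a * b ≠ b * a := by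
    by_contra! h
    exact hH (Group.isSolvable_of_comm h)
  replace hab : (a * b : SL2) ≠ b * a := fun h ↦ hab (Subtype.ext h)
  rcases le_or_gt 2 |a.1.1.trace| with ha | ha
  · exact ⟨a, a.2, ha, conjPart_ne_zero_of_two_le_abs_trace ha hab⟩
  · have htrace : 2 < (a * b * a⁻¹ * b⁻¹ : SL2).1.trace :=
      lt_of_lt_of_eq (by linarith [det_commutator_neg ha hab]) (trace_commutator a.1 b.1).symm
    exact ⟨(a * b * a⁻¹ * b⁻¹ : H), SetLike.coe_mem _, htrace.le.trans (le_abs_self _),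
      conjPart_ne_zero_of_two_lt_trace htrace⟩

theorem isSolvable_of_forall_measurePreserving {H : Subgroup SL2} {ν : Measure Circle}
    [IsFiniteMeasure ν] [NeZero ν]
    (hν : ∀ h ∈ H, MeasurePreserving (h • · : Circle → Circle) ν ν) : Group.IsSolvable H := by
  by_contra hH
  obtain ⟨h, hh, htrace, hconj⟩ := exists_two_le_abs_trace_of_not_isSolvable hH
  have hfix := ae_smul_eq_self_of_measurePreserving htrace (hν h hh)
  let A : Set Circle := {z | ν {z} ≠ 0}
  have hsub : A ⊆ MulAction.fixedBy Circle h := fun z hz ↦ by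
    by_contra hne
    exact hz (measure_mono_null (Set.singleton_subset_iff.2 hne) hfix)
  have hcard : A.encard ≤ 2 := (Set.encard_le_encard hsub).trans (encard_fixedBy_le_two hconj)
  obtain ⟨a, ha⟩ : A.Nonempty := by
    by_contra hA
    have : NullSingletonClass ν := ⟨fun z ↦ by_contra fun hz ↦ hA ⟨z, hz⟩⟩
    have hfin := Set.finite_of_encard_le_coe (encard_fixedBy_le_two hconj)
    obtain ⟨z, hz, hz'⟩ := (hfix.and (measure_eq_zero_iff_ae_notMem.1 (hfin.measure_zero ν))).exists
    exact hz' hz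
  have hstab : H ≤ MulAction.stabilizer SL2 A := fun g hg ↦ by
    refine MulAction.mem_stabilizer_set.2 fun z ↦ not_congr ?_
    have := (hν g hg).measure_preimage (measurableSet_singleton (g • z)).nullMeasurableSet
    rw [← this, ← Set.image_singleton, Set.preimage_image_eq _ (MulAction.injective g)]
  have := isSolvable_stabilizer_of_encard_le_two hcard ha (G := SL2)
  exact hH (Group.isSolvable_of_isSolvable_injective (Subgroup.inclusion_injective hstab))

end Solvability

section Stationary

/-- A measure `ν` on a `G`-space is `μ`-stationary if `μ ∗ ν = ν`, that is, if the action carries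
`μ ⊗ ν` to `ν`. -/
def IsConvStationary {G X : Type*} [SMul G X] [MeasurableSpace G] [MeasurableSpace X]
    (μ : Measure G) (ν : Measure X) : Prop :=
  MeasurePreserving (fun p : G × X ↦ p.1 • p.2) (μ.prod ν) ν

variable {G X : Type*} [Group G] [MulAction G X]

lemma isClosed_stabilizer_of_finite [TopologicalSpace G] [TopologicalSpace X] [ContinuousSMul G X]
    [T1Space X] {A : Set X} (hA : A.Finite) :
    IsClosed (MulAction.stabilizer G A : Set G) := by
  have : (MulAction.stabilizer G A : Set G) = ⋂ z ∈ A, (· • z) ⁻¹' A := by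
    ext g
    simpa using MulAction.mem_stabilizer_set' hA
  rw [this]
  exact isClosed_biInter fun z _ ↦ hA.isClosed.preimage (by fun_prop)

variable [MeasurableSpace X]

namespace IsConvStationary

variable [MeasurableSpace G] {μ : Measure G} {ν : Measure X}

lemma measure_singleton [MeasurableSingletonClass X] [SFinite ν] (h : IsConvStationary μ ν)
    (z : X) : ν {z} = ∫⁻ g, ν {g⁻¹ • z} ∂μ := by
  rw [← h.measure_preimage (measurableSet_singleton z).nullMeasurableSet,
    Measure.prod_apply (h.measurable (measurableSet_singleton z))]
  congr! 3 with g
  ext w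
  simp [eq_inv_smul_iff]

lemma exists_finite_ae_mem_stabilizer [MeasurableSingletonClass X] [IsProbabilityMeasure μ]
    [IsFiniteMeasure ν] (h : IsConvStationary μ ν) {z₀ : X} (hz₀ : ν {z₀} ≠ 0) :
    ∃ A : Set X, A.Finite ∧ A.Nonempty ∧ ∀ᵐ g ∂μ, g ∈ MulAction.stabilizer G A := by
  have finite_atoms {z : X} (hz : ν {z} ≠ 0) : {w | ν {z} ≤ ν {w}}.Finite :=
    Measure.finite_const_le_meas_of_disjoint_iUnion ν (pos_iff_ne_zero.2 hz)
      (fun _ ↦ measurableSet_singleton _) (fun _ _ hne ↦ by simpa using hne)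
      (measure_ne_top _ _)
  obtain ⟨z₁, hz₁, hmax₁⟩ :=
    Set.exists_max_image _ (fun z ↦ ν {z}) (finite_atoms hz₀) ⟨z₀, le_refl (ν {z₀})⟩
  have hmax (z : X) : ν {z} ≤ ν {z₁} :=
    (le_total (ν {z₀}) (ν {z})).elim (hmax₁ z) fun hz ↦ hz.trans hz₁
  have hfin := finite_atoms ((pos_iff_ne_zero.2 hz₀).trans_le hz₁).ne'
  refine ⟨_, hfin, ⟨z₁, le_refl (ν {z₁})⟩, ?_⟩
  have heavy : ∀ᵐ g ∂μ, ∀ z ∈ {w | ν {z₁} ≤ ν {w}}, g⁻¹ • z ∈ {w | ν {z₁} ≤ ν {w}} := by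
    rw [ae_ball_iff hfin.countable]
    intro z hz
    have hmean : ∫⁻ _, ν {z₁} ∂μ ≤ ∫⁻ g, ν {g⁻¹ • z} ∂μ := by
      rw [← h.measure_singleton, lintegral_const, measure_univ, mul_one]
      exact hz
    have := ae_eq_of_ae_le_of_lintegral_le (ae_of_all μ fun g ↦ hmax (g⁻¹ • z))
      (by rw [← h.measure_singleton]; exact measure_ne_top _ _) aemeasurable_const hmean
    filter_upwards [this] with g hg using hg.ge
  filter_upwards [heavy] with g hg
  exact inv_mem_iff.1 ((MulAction.mem_stabilizer_set' hfin).2 fun z hz ↦ hg z hz)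

end IsConvStationary

variable [TopologicalSpace G] [TopologicalSpace X] [ContinuousSMul G X]

/-- The group of the `g` preserving the measure `ν`. -/
def invariantSubgroup (G : Type*) [Group G] [MulAction G X] [TopologicalSpace G]
    [ContinuousSMul G X] [BorelSpace X] (ν : Measure X) : Subgroup G where
  carrier := {g | MeasurePreserving (g • ·) ν ν}
  one_mem' := by simpa [Function.id_def] using MeasurePreserving.id ν
  mul_mem' {a b} ha hb := by simpa [Function.comp_def, mul_smul] using ha.comp hb
  inv_mem' {g} hg :=
    MeasurePreserving.symm (Homeomorph.smul g).toMeasurableEquiv hg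

lemma isClosed_invariantSubgroup [FirstCountableTopology G] [BorelSpace X]
    [HasOuterApproxClosed X] (ν : Measure X) [IsFiniteMeasure ν] :
    IsClosed (invariantSubgroup G ν : Set G) := by
  have : (invariantSubgroup G ν : Set G) =
      ⋂ f : BoundedContinuousFunction X ℝ, {g | ∫ x, f (g • x) ∂ν = ∫ x, f x ∂ν} := by
    ext g
    have hg : Measurable (g • · : X → X) := (continuous_const_smul g).measurable
    have integral_map (f : BoundedContinuousFunction X ℝ) :
        ∫ x, f x ∂ν.map (g • ·) = ∫ x, f (g • x) ∂ν :=
      integral_map hg.aemeasurable f.continuous.measurable.aestronglyMeasurable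
    simp only [Set.mem_iInter, Set.mem_ofPred_eq, ← integral_map]
    exact ⟨fun h f ↦ by rw [MeasurePreserving.map_eq h],
      fun h ↦ ⟨hg, ext_of_forall_integral_eq_of_IsFiniteMeasure h⟩⟩
  rw [this]
  refine isClosed_iInter fun f ↦ isClosed_eq ?_ continuous_const
  refine continuous_of_dominated (bound := fun _ ↦ ‖f‖) (fun g ↦ ?_)
    (fun g ↦ ae_of_all _ fun x ↦ f.norm_coe_le_norm _) (integrable_const _)
    (ae_of_all _ fun x ↦ by fun_prop)
  exact (f.continuous.comp (continuous_const_smul g)).measurable.aestronglyMeasurable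

end Stationary

lemma closure_measSupp_le {μ : Measure SL2} {K : Subgroup SL2} (hK : IsClosed (K : Set SL2))
    (hμ : ∀ᵐ g ∂μ, g ∈ K) : Subgroup.closure (measSupp μ) ≤ K := by
  refine (Subgroup.closure_le K).2 fun g hg ↦ by_contra fun hgK ↦ ?_
  exact (hg _ hK.isOpen_compl hgK).ne' (ae_iff.1 hμ)

lemma isSolvable_stabilizer_of_finite {A : Set Circle} (hA : A.Finite) (hne : A.Nonempty) :
    Group.IsSolvable (MulAction.stabilizer SL2 A) := by
  have : IsFiniteMeasure (Measure.count.restrict A) :=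
    isFiniteMeasure_restrict.2 (Measure.count_apply_lt_top.2 hA).ne
  have : NeZero (Measure.count.restrict A) := by
    refine ⟨fun h ↦ ?_⟩
    rw [Measure.restrict_eq_zero, Measure.count_eq_zero_iff] at h
    exact hne.ne_empty h
  refine isSolvable_of_forall_measurePreserving (ν := Measure.count.restrict A) fun g hg ↦ ?_
  have hg_meas : Measurable (g • · : Circle → Circle) := (continuous_const_smul g).measurable
  have hcount : MeasurePreserving (g • · : Circle → Circle) Measure.count Measure.count := by
    refine ⟨hg_meas, Measure.ext fun s hs ↦ ?_⟩
    rw [Measure.map_apply hg_meas hs, Measure.count_apply (hg_meas hs), Measure.count_apply hs,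
      Set.encard_preimage_of_bijective (MulAction.bijective g)]
  have hgA : (g • · : Circle → Circle) ⁻¹' A = A := by
    rw [Set.preimage_smul, MulAction.mem_stabilizer_iff.1 (inv_mem hg)]
  simpa only [hgA] using hcount.restrict_preimage hA.measurableSet

lemma IsConvStationary.nullSingletonClass {μ : Measure SL2} [IsProbabilityMeasure μ]
    {ν : Measure Circle} [IsFiniteMeasure ν] (h : IsConvStationary μ ν)
    (hμ : ¬ Group.IsSolvable (Subgroup.closure (measSupp μ))) : NullSingletonClass ν := by
  refine ⟨fun z ↦ by_contra fun hz ↦ hμ ?_⟩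
  obtain ⟨A, hA, hne, hstab⟩ := h.exists_finite_ae_mem_stabilizer hz
  have := isSolvable_stabilizer_of_finite hA hne
  exact Group.isSolvable_of_isSolvable_injective
    (Subgroup.inclusion_injective (closure_measSupp_le (isClosed_stabilizer_of_finite hA) hstab))

lemma not_ae_measurePreserving {μ : Measure SL2} {ν : Measure Circle}
    [IsFiniteMeasure ν] [NeZero ν]
    (hμ : ¬ Group.IsSolvable (Subgroup.closure (measSupp μ))) :
    ¬ ∀ᵐ g ∂μ, MeasurePreserving (g • · : Circle → Circle) ν ν := fun h ↦
  hμ <| isSolvable_of_forall_measurePreserving (ν := ν) fun _ hg ↦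
    closure_measSupp_le (isClosed_invariantSubgroup ν) h hg

lemma integral_norm_sub_integral_sq {α E : Type*} [MeasurableSpace α] [NormedAddCommGroup E]
    [InnerProductSpace ℝ E] [CompleteSpace E] {μ : Measure α} [IsProbabilityMeasure μ]
    {f : α → E} (hf : MemLp f 2 μ) :
    ∫ x, ‖f x - ∫ y, f y ∂μ‖ ^ 2 ∂μ = ∫ x, ‖f x‖ ^ 2 ∂μ - ‖∫ y, f y ∂μ‖ ^ 2 := by
  have hf1 := hf.integrable one_le_two
  set c := ∫ y, f y ∂μ
  have hinner : Integrable (fun x ↦ 2 * inner ℝ c (f x)) μ := (hf1.const_inner c).const_mul 2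
  have hmean : ∫ x, 2 * inner ℝ c (f x) ∂μ = 2 * ‖c‖ ^ 2 := by
    rw [integral_const_mul, integral_inner hf1, real_inner_self_eq_norm_sq]
  have hsq := hf.integrable_norm_pow two_ne_zero
  simp_rw [norm_sub_sq_real, real_inner_comm c]
  rw [integral_add (by exact hsq.sub hinner) (integrable_const _), integral_sub hsq hinner, hmean,
    integral_const, probReal_univ, one_smul]
  ring

section CircleMoment

/-- The `k`-th moment `∫ zᵏ dν` of a measure on the circle; the moments of negative order are the
conjugates of these. -/
def circleMoment (ν : Measure Circle) (k : ℕ) : ℂ := ∫ z : Circle, (z : ℂ) ^ k ∂ν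

lemma continuous_coe_pow (k : ℕ) : Continuous fun z : Circle ↦ (z : ℂ) ^ k := by fun_prop

lemma norm_coe_pow (z : Circle) (k : ℕ) : ‖(z : ℂ) ^ k‖ = 1 := by
  rw [norm_pow, Circle.norm_coe, one_pow]

lemma norm_circleMoment_le (ν : Measure Circle) [IsProbabilityMeasure ν] (k : ℕ) :
    ‖circleMoment ν k‖ ≤ 1 := by
  simpa [circleMoment] using norm_integral_le_of_norm_le_const (μ := ν)
    (f := fun z : Circle ↦ (z : ℂ) ^ k) (C := 1) (ae_of_all _ fun z ↦ (norm_coe_pow _ k).le)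

lemma integral_zpow_eq_of_circleMoment_eq {ν₁ ν₂ : Measure Circle}
    (h : ∀ k, circleMoment ν₁ k = circleMoment ν₂ k) :
    ∀ n : ℤ, ∫ z : Circle, (z : ℂ) ^ n ∂ν₁ = ∫ z : Circle, (z : ℂ) ^ n ∂ν₂
  | .ofNat k => by simpa [circleMoment] using h k
  | .negSucc k => by
    have hconj (z : Circle) : (z : ℂ) ^ Int.negSucc k = conj ((z : ℂ) ^ (k + 1)) := by
      rw [zpow_negSucc, map_pow, ← Circle.coe_inv_eq_conj, Circle.coe_inv, inv_pow]
    simp_rw [hconj, integral_conj]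
    exact congrArg conj (h (k + 1))

lemma eq_of_circleMoment_eq {ν₁ ν₂ : Measure Circle} [IsFiniteMeasure ν₁] [IsFiniteMeasure ν₂]
    (h : ∀ k, circleMoment ν₁ k = circleMoment ν₂ k) : ν₁ = ν₂ := by
  let ι : BoundedContinuousFunction Circle ℂ :=
    BoundedContinuousFunction.mkOfCompact ⟨fun z ↦ (z : ℂ), by fun_prop⟩
  refine ext_of_forall_mem_subalgebra_integral_eq_of_polish (𝕜 := ℂ)
    (A := StarAlgebra.adjoin ℂ {ι}) (fun z w hzw ↦ ?_) fun f hf ↦ ?_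
  · exact ⟨_, ⟨_, ⟨ι, StarAlgebra.subset_adjoin ℂ _ rfl, rfl⟩, rfl⟩, fun e ↦ hzw (Circle.ext e)⟩
  have monomial : ∀ f ∈ Submonoid.closure ({ι} ∪ star {ι}), ∃ n : ℤ, ∀ z, f z = (z : ℂ) ^ n := by
    intro f hf
    induction hf using Submonoid.closure_induction with
    | mem f hf =>
      rcases hf with rfl | hf
      · exact ⟨1, fun z ↦ (zpow_one _).symm⟩
      · obtain rfl : f = star ι := (star_eq_iff_star_eq.1 hf).symm
        exact ⟨-1, fun z ↦ by rw [zpow_neg_one, ← Circle.coe_inv, Circle.coe_inv_eq_conj]; rfl⟩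
    | one => exact ⟨0, fun z ↦ (zpow_zero _).symm⟩
    | mul f g _ _ hf hg =>
      obtain ⟨⟨m, hm⟩, ⟨n, hn⟩⟩ := And.intro hf hg
      exact ⟨m + n, fun z ↦ by rw [zpow_add₀ z.coe_ne_zero, ← hm, ← hn]; rfl⟩
  replace hf : f ∈ Submodule.span ℂ (Submonoid.closure ({ι} ∪ star {ι}) : Set _) := by
    rw [← Algebra.adjoin_eq_span]
    exact hf
  induction hf using Submodule.span_induction with
  | mem f hf =>
    obtain ⟨n, hn⟩ := monomial f hf
    simpa only [hn] using integral_zpow_eq_of_circleMoment_eq h n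
  | zero => simp
  | add f g _ _ hf hg =>
    simp only [BoundedContinuousFunction.add_apply]
    rw [integral_add (f.integrable ν₁) (g.integrable ν₁),
      integral_add (f.integrable ν₂) (g.integrable ν₂), hf, hg]
  | smul a f _ hf =>
    simp only [BoundedContinuousFunction.smul_apply]
    rw [integral_smul, integral_smul, hf]

variable {ν : Measure Circle}

instance [IsProbabilityMeasure ν] (g : SL2) : IsProbabilityMeasure (ν.map (g • ·)) :=
  Measure.isProbabilityMeasure_map (continuous_const_smul g).measurable.aemeasurable

lemma circleMoment_map_smul (g : SL2) (k : ℕ) :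
    circleMoment (ν.map (g • ·)) k = ∫ z : Circle, ((g • z : Circle) : ℂ) ^ k ∂ν :=
  integral_map (continuous_const_smul g).measurable.aemeasurable
    (continuous_coe_pow k).aestronglyMeasurable

lemma continuous_circleMoment_map_smul [IsFiniteMeasure ν] (k : ℕ) :
    Continuous fun g : SL2 ↦ circleMoment (ν.map (g • ·)) k := by
  simp_rw [circleMoment_map_smul]
  refine continuous_of_dominated (bound := fun _ ↦ 1) (fun g ↦ ?_)
    (fun g ↦ ae_of_all _ fun z ↦ (norm_coe_pow _ k).le) (integrable_const _)
    (ae_of_all _ fun z ↦ (continuous_coe_pow k).comp (by fun_prop))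
  exact ((continuous_coe_pow k).comp (continuous_const_smul g)).aestronglyMeasurable

lemma memLp_circleMoment_map_smul (μ : Measure SL2) [IsFiniteMeasure μ] [IsProbabilityMeasure ν]
    (k : ℕ) : MemLp (fun g : SL2 ↦ circleMoment (ν.map (g • ·)) k) 2 μ :=
  MemLp.of_bound (continuous_circleMoment_map_smul k).aestronglyMeasurable 1 <|
    ae_of_all _ fun _ ↦ norm_circleMoment_le _ k

lemma IsConvStationary.integral_circleMoment_map_smul {μ : Measure SL2} [IsFiniteMeasure μ]
    [IsFiniteMeasure ν] (h : IsConvStationary μ ν) (k : ℕ) :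
    ∫ g, circleMoment (ν.map (g • ·)) k ∂μ = circleMoment ν k := by
  have hcont : Continuous fun p : SL2 × Circle ↦ ((p.1 • p.2 : Circle) : ℂ) ^ k :=
    (continuous_coe_pow k).comp continuous_smul
  have hint : Integrable (fun p : SL2 × Circle ↦ ((p.1 • p.2 : Circle) : ℂ) ^ k) (μ.prod ν) :=
    Integrable.of_bound hcont.aestronglyMeasurable 1 (ae_of_all _ fun p ↦ (norm_coe_pow _ k).le)
  simp_rw [circleMoment_map_smul]
  rw [← integral_prod _ hint]
  rw [circleMoment, ← h.map_eq,
    integral_map h.aemeasurable (continuous_coe_pow k).aestronglyMeasurable, h.map_eq]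

end CircleMoment

section LogKernel

/-- The regularised logarithmic kernel on the circle: as `r → 1⁻` it tends to `-log ‖z - w‖`. -/
def logKernel (r : ℝ) (z w : Circle) : ℝ := -Real.log ‖1 - (r : ℂ) * (z * conj (w : ℂ))‖

lemma sq_norm_one_sub_mul (r : ℝ) (z w : Circle) :
    ‖1 - (r : ℂ) * (z * conj (w : ℂ))‖ ^ 2 = (1 - r) ^ 2 + r * ‖(z : ℂ) - w‖ ^ 2 := by
  simp only [← Complex.normSq_eq_norm_sq, Complex.normSq_sub, map_mul, map_one, one_mul,
    Circle.normSq_coe, Complex.normSq_conj, Complex.normSq_ofReal, Complex.conj_conj,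
    Complex.conj_ofReal, Complex.re_ofReal_mul, mul_one]
  rw [← Complex.conj_re, map_mul, Complex.conj_conj]
  ring

lemma norm_one_sub_mul_pos {r : ℝ} (hr : r ∈ Set.Ico 0 1) (z w : Circle) :
    0 < ‖1 - (r : ℂ) * (z * conj (w : ℂ))‖ := by
  refine (norm_nonneg _).lt_of_ne' fun h ↦ ?_
  have hsq := sq_norm_one_sub_mul r z w
  rw [h] at hsq
  nlinarith [mul_nonneg hr.1 (sq_nonneg ‖(z : ℂ) - w‖), pow_pos (sub_pos.2 hr.2) 2]

-- The term `k = 0` vanishes because of the convention `x / 0 = 0`.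
lemma hasSum_logKernel {r : ℝ} (hr : r ∈ Set.Ico 0 1) (z w : Circle) :
    HasSum (fun k : ℕ ↦ r ^ k / k * ((z : ℂ) ^ k * conj ((w : ℂ) ^ k)).re) (logKernel r z w) := by
  have hnorm : ‖(r : ℂ) * (z * conj (w : ℂ))‖ < 1 := by
    rw [norm_mul, norm_mul, RCLike.norm_conj, Circle.norm_coe, Circle.norm_coe, mul_one, mul_one,
      Complex.norm_real, Real.norm_of_nonneg hr.1]
    exact hr.2
  convert Complex.hasSum_re (Complex.hasSum_taylorSeries_neg_log hnorm) using 1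
  · ext k
    rw [← Complex.re_ofReal_mul, mul_pow, mul_pow, map_pow]
    congr 1
    push_cast
    ring
  · rw [logKernel, Complex.neg_re, Complex.log_re]

lemma continuous_logKernel {r : ℝ} (hr : r ∈ Set.Ico 0 1) :
    Continuous fun p : Circle × Circle ↦ logKernel r p.1 p.2 :=
  (by fun_prop : Continuous fun p : Circle × Circle ↦
    ‖1 - (r : ℂ) * (p.1 * conj (p.2 : ℂ))‖).log
      (fun p ↦ (norm_one_sub_mul_pos hr p.1 p.2).ne') |>.neg

lemma tendsto_logKernel {z w : Circle} (hzw : z ≠ w) :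
    Tendsto (fun r ↦ logKernel r z w) (𝓝[<] 1) (𝓝 (-Real.log ‖(z : ℂ) - w‖)) := by
  have hone : ‖1 - ((1 : ℝ) : ℂ) * (z * conj (w : ℂ))‖ = ‖(z : ℂ) - w‖ := by
    refine (sq_eq_sq₀ (norm_nonneg _) (norm_nonneg _)).1 ?_
    rw [sq_norm_one_sub_mul]
    ring
  have hne : ‖(z : ℂ) - w‖ ≠ 0 := norm_ne_zero_iff.2 (sub_ne_zero.2 fun h ↦ hzw (Circle.ext h))
  have hcont : ContinuousAt (fun r ↦ logKernel r z w) 1 :=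
    (ContinuousAt.log (by fun_prop) (hone ▸ hne)).neg
  convert hcont.tendsto.mono_left nhdsWithin_le_nhds using 2
  rw [logKernel, hone]

lemma norm_sub_le_norm_smul_sub_smul (g : SL2) (z w : Circle) :
    ‖(z : ℂ) - w‖ ≤ opNorm g ^ 2 * ‖((g • z : Circle) : ℂ) - (g • w : Circle)‖ := by
  rw [← norm_smul_sub_smul_mul g z w, mul_comm, sq]
  gcongr
  · exact (opNorm_pos g).le
  · exact norm_denom_le g z
  · exact norm_denom_le g w

lemma logKernel_smul_smul_le {r : ℝ} (hr : r ∈ Set.Ico 0 1) (g : SL2) (z w : Circle) :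
    logKernel r (g • z) (g • w) ≤ logKernel r z w + 2 * kappa g := by
  have hN : 1 ≤ (opNorm g ^ 2) ^ 2 := one_le_pow₀ (one_le_pow₀ (one_le_opNorm g))
  have hle : ‖1 - (r : ℂ) * (z * conj (w : ℂ))‖ ≤
      opNorm g ^ 2 * ‖1 - (r : ℂ) * ((g • z : Circle) * conj ((g • w : Circle) : ℂ))‖ := by
    refine le_of_sq_le_sq ?_ (by positivity)
    rw [mul_pow, sq_norm_one_sub_mul, sq_norm_one_sub_mul, mul_add, mul_left_comm _ r]
    have hdist := pow_le_pow_left₀ (norm_nonneg _) (norm_sub_le_norm_smul_sub_smul g z w) 2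
    rw [mul_pow] at hdist
    exact add_le_add (le_mul_of_one_le_left (sq_nonneg _) hN) (mul_le_mul_of_nonneg_left hdist hr.1)
  have hlog := Real.log_le_log (norm_one_sub_mul_pos hr z w) hle
  rw [Real.log_mul (pow_pos (opNorm_pos g) 2).ne' (norm_one_sub_mul_pos hr _ _).ne',
    Real.log_pow] at hlog
  rw [logKernel, logKernel, kappa]
  push_cast at hlog
  linarith

lemma abs_logKernel_smul_sub_le {r : ℝ} (hr : r ∈ Set.Ico 0 1) (g : SL2) (z w : Circle) :
    |logKernel r (g • z) (g • w) - logKernel r z w| ≤ 2 * kappa g := by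
  have h := logKernel_smul_smul_le hr g⁻¹ (g • z) (g • w)
  rw [inv_smul_smul, inv_smul_smul, kappa, opNorm_inv, ← kappa] at h
  exact abs_le.2 ⟨by linarith, by linarith [logKernel_smul_smul_le hr g z w]⟩

lemma tendsto_logKernel_smul_sub (g : SL2) {z w : Circle} (hzw : z ≠ w) :
    Tendsto (fun r ↦ logKernel r (g • z) (g • w) - logKernel r z w) (𝓝[<] 1)
      (𝓝 (Real.log ‖denom g z‖ + Real.log ‖denom g w‖)) := by
  have hg : g • z ≠ g • w := (MulAction.injective g).ne hzw
  have hne : ‖((g • z : Circle) : ℂ) - (g • w : Circle)‖ ≠ 0 :=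
    norm_ne_zero_iff.2 (sub_ne_zero.2 fun h ↦ hg (Circle.ext h))
  convert (tendsto_logKernel hg).sub (tendsto_logKernel hzw) using 2
  have hz := (norm_denom_pos g z).ne'
  have hw := (norm_denom_pos g w).ne'
  rw [← norm_smul_sub_smul_mul g z w, Real.log_mul hne (mul_ne_zero hz hw), Real.log_mul hz hw]
  ring

end LogKernel

section Energy

lemma hasSum_integral_pow_div_mul {α : Type*} [MeasurableSpace α] {μ : Measure α}
    [IsFiniteMeasure μ] {r : ℝ} (hr : r ∈ Set.Ico 0 1) {F : ℕ → α → ℝ} {S : α → ℝ} {C : ℝ}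
    (hF : ∀ k, AEStronglyMeasurable (F k) μ) (hC : ∀ k x, |F k x| ≤ C)
    (hS : ∀ x, HasSum (fun k : ℕ ↦ r ^ k / k * F k x) (S x)) :
    HasSum (fun k : ℕ ↦ r ^ k / k * ∫ x, F k x ∂μ) (∫ x, S x ∂μ) := by
  simp_rw [← integral_const_mul]
  refine hasSum_integral_of_dominated_convergence (fun k _ ↦ r ^ k * C)
    (fun k ↦ (hF k).const_mul _) (fun k ↦ ae_of_all _ fun x ↦ ?_)
    (ae_of_all _ fun _ ↦ (summable_geometric_of_lt_one hr.1 hr.2).mul_right C)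
    (integrable_const _) (ae_of_all _ hS)
  have hpow : 0 ≤ r ^ k := pow_nonneg hr.1 k
  have hdiv : r ^ k / k ≤ r ^ k := by
    rcases k.eq_zero_or_pos with rfl | hk
    · simp
    · exact div_le_self hpow (Nat.one_le_cast.2 hk)
  rw [norm_mul, Real.norm_of_nonneg (div_nonneg hpow k.cast_nonneg)]
  exact mul_le_mul hdiv (hC k x) (abs_nonneg _) hpow

lemma ae_fst_ne_snd {X : Type*} [MeasurableSpace X] [MeasurableEq X] {μ ν : Measure X}
    [SFinite ν] [NullSingletonClass ν] : ∀ᵐ p ∂(μ.prod ν), p.1 ≠ p.2 := by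
  refine (Measure.ae_prod_mem_iff_ae_ae_mem (s := (Set.diagonal X)ᶜ)
    measurableSet_diagonal.compl).2 (ae_of_all _ fun x ↦ ?_)
  filter_upwards [ν.ae_ne x] with y hy using hy.symm

lemma integrable_of_continuous {X E : Type*} [TopologicalSpace X] [CompactSpace X]
    [MeasurableSpace X] [OpensMeasurableSpace X] [NormedAddCommGroup E] {μ : Measure X}
    [IsFiniteMeasure μ] {f : X → E} (hf : Continuous f) : Integrable f μ :=
  hf.integrable_of_hasCompactSupport (.of_compactSpace f)

/-- The energy of a measure on the circle for the regularised logarithmic kernel `logKernel r`. -/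
def circleEnergy (r : ℝ) (ν : Measure Circle) : ℝ :=
  ∫ p, logKernel r p.1 p.2 ∂(ν.prod ν)

variable {r : ℝ} {ν : Measure Circle}

lemma integral_pow_mul_conj_pow [SFinite ν] (k : ℕ) :
    ∫ p : Circle × Circle, (p.1 : ℂ) ^ k * conj ((p.2 : ℂ) ^ k) ∂(ν.prod ν) =
      (‖circleMoment ν k‖ ^ 2 : ℝ) := by
  rw [integral_prod_mul (fun z : Circle ↦ (z : ℂ) ^ k) fun w : Circle ↦ conj ((w : ℂ) ^ k),
    integral_conj, ← circleMoment, Complex.mul_conj, Complex.normSq_eq_norm_sq]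

lemma hasSum_circleEnergy [IsFiniteMeasure ν] (hr : r ∈ Set.Ico 0 1) :
    HasSum (fun k : ℕ ↦ r ^ k / k * ‖circleMoment ν k‖ ^ 2) (circleEnergy r ν) := by
  have hcont (k : ℕ) :
      Continuous fun p : Circle × Circle ↦ (p.1 : ℂ) ^ k * conj ((p.2 : ℂ) ^ k) := by fun_prop
  have hre (k : ℕ) : ∫ p : Circle × Circle, ((p.1 : ℂ) ^ k * conj ((p.2 : ℂ) ^ k)).re ∂(ν.prod ν) =
      ‖circleMoment ν k‖ ^ 2 := by
    refine (integral_re (integrable_of_continuous (hcont k))).trans ?_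
    rw [integral_pow_mul_conj_pow]
    exact Complex.ofReal_re _
  simp_rw [← hre]
  refine hasSum_integral_pow_div_mul hr (C := 1)
    (fun k ↦ (Complex.continuous_re.comp (hcont k)).aestronglyMeasurable) (fun k p ↦ ?_)
    fun p ↦ hasSum_logKernel hr p.1 p.2
  refine (Complex.abs_re_le_norm _).trans_eq ?_
  rw [norm_mul, RCLike.norm_conj, norm_coe_pow, norm_coe_pow, mul_one]

lemma circleEnergy_map_smul [SFinite ν] (hr : r ∈ Set.Ico 0 1) (g : SL2) :
    circleEnergy r (ν.map (g • ·)) = ∫ p, logKernel r (g • p.1) (g • p.2) ∂(ν.prod ν) := by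
  have hg : Measurable (g • · : Circle → Circle) := (continuous_const_smul g).measurable
  rw [circleEnergy, Measure.map_prod_map _ _ hg hg, integral_map (hg.prodMap hg).aemeasurable
    (continuous_logKernel hr).aestronglyMeasurable]
  rfl

lemma continuous_logKernel_smul (hr : r ∈ Set.Ico 0 1) :
    Continuous fun q : SL2 × Circle × Circle ↦ logKernel r (q.1 • q.2.1) (q.1 • q.2.2) := by
  have hsmul : Continuous fun q : SL2 × Circle × Circle ↦ (q.1 • q.2.1, q.1 • q.2.2) :=
    (continuous_fst.smul continuous_snd.fst).prodMk (continuous_fst.smul continuous_snd.snd)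
  have hcomp := (continuous_logKernel hr).comp hsmul
  exact hcomp

lemma continuous_logKernel_smul_right (hr : r ∈ Set.Ico 0 1) (g : SL2) :
    Continuous fun p : Circle × Circle ↦ logKernel r (g • p.1) (g • p.2) := by
  have hcomp := (continuous_logKernel_smul hr).comp (Continuous.prodMk_right g)
  exact hcomp

lemma continuous_logKernel_smul_sub (hr : r ∈ Set.Ico 0 1) (g : SL2) :
    Continuous fun p : Circle × Circle ↦
      logKernel r (g • p.1) (g • p.2) - logKernel r p.1 p.2 :=
  (continuous_logKernel_smul_right hr g).sub (continuous_logKernel hr)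

lemma stronglyMeasurable_circleEnergy_map_smul [SFinite ν] (hr : r ∈ Set.Ico 0 1) :
    StronglyMeasurable fun g : SL2 ↦ circleEnergy r (ν.map (g • ·)) := by
  simp_rw [circleEnergy_map_smul hr]
  exact (continuous_logKernel_smul hr).stronglyMeasurable.integral_prod_right

lemma circleEnergy_map_smul_sub [IsFiniteMeasure ν] (hr : r ∈ Set.Ico 0 1) (g : SL2) :
    circleEnergy r (ν.map (g • ·)) - circleEnergy r ν =
      ∫ p, (logKernel r (g • p.1) (g • p.2) - logKernel r p.1 p.2) ∂(ν.prod ν) := by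
  rw [circleEnergy_map_smul hr, circleEnergy, integral_sub
    (integrable_of_continuous (continuous_logKernel_smul_right hr g))
    (integrable_of_continuous (continuous_logKernel hr))]

lemma abs_circleEnergy_map_smul_sub_le [IsProbabilityMeasure ν] (hr : r ∈ Set.Ico 0 1) (g : SL2) :
    |circleEnergy r (ν.map (g • ·)) - circleEnergy r ν| ≤ 2 * kappa g := by
  rw [circleEnergy_map_smul_sub hr]
  have := norm_integral_le_of_norm_le_const (μ := ν.prod ν)
    (f := fun p ↦ logKernel r (g • p.1) (g • p.2) - logKernel r p.1 p.2)
    (ae_of_all _ fun p ↦ abs_logKernel_smul_sub_le hr g p.1 p.2)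
  rwa [probReal_univ, mul_one] at this

lemma continuous_log_norm_denom_right (g : SL2) :
    Continuous fun z : Circle ↦ Real.log ‖denom g z‖ := by
  have hcomp := continuous_log_norm_denom.comp (Continuous.prodMk_right g)
  exact hcomp

lemma tendsto_circleEnergy_map_smul_sub [IsProbabilityMeasure ν] [NullSingletonClass ν]
    (g : SL2) :
    Tendsto (fun r ↦ circleEnergy r (ν.map (g • ·)) - circleEnergy r ν) (𝓝[<] 1)
      (𝓝 (2 * ∫ z, Real.log ‖denom g z‖ ∂ν)) := by
  have hint : Integrable (fun z ↦ Real.log ‖denom g z‖) ν :=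
    integrable_of_continuous (continuous_log_norm_denom_right g)
  have hlim : 2 * ∫ z, Real.log ‖denom g z‖ ∂ν =
      ∫ p, (Real.log ‖denom g p.1‖ + Real.log ‖denom g p.2‖) ∂(ν.prod ν) := by
    rw [integral_add (hint.comp_fst ν) (hint.comp_snd ν), integral_fun_fst
      (fun z ↦ Real.log ‖denom g z‖), integral_fun_snd (fun z ↦ Real.log ‖denom g z‖),
      probReal_univ, one_smul, two_mul]
  have hIco := Ico_mem_nhdsLT (zero_lt_one' ℝ)
  rw [hlim]
  refine Tendsto.congr' (eventually_of_mem hIco fun r hr ↦ (circleEnergy_map_smul_sub hr g).symm) ?_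
  refine tendsto_integral_filter_of_dominated_convergence (fun _ ↦ 2 * kappa g) ?_ ?_
    (integrable_const _) ?_
  · filter_upwards [hIco] with r hr using
      (continuous_logKernel_smul_sub hr g).aestronglyMeasurable
  · filter_upwards [hIco] with r hr using
      ae_of_all _ fun p ↦ abs_logKernel_smul_sub_le hr g p.1 p.2
  · filter_upwards [ae_fst_ne_snd] with p hp using tendsto_logKernel_smul_sub g hp

end Energy

section Drift

lemma tendsto_integral_circleEnergy_sub {μ : Measure SL2} {ν : Measure Circle}
    [IsProbabilityMeasure ν] [NullSingletonClass ν] (hκ : Integrable kappa μ) :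
    Tendsto (fun r ↦ ∫ g, (circleEnergy r (ν.map (g • ·)) - circleEnergy r ν) ∂μ) (𝓝[<] 1)
      (𝓝 (∫ g, 2 * ∫ z, Real.log ‖denom g z‖ ∂ν ∂μ)) := by
  have hIco := Ico_mem_nhdsLT (zero_lt_one' ℝ)
  refine tendsto_integral_filter_of_dominated_convergence (fun g ↦ 2 * kappa g) ?_ ?_
    (hκ.const_mul 2) (ae_of_all _ tendsto_circleEnergy_map_smul_sub)
  · filter_upwards [hIco] with r hr using
      ((stronglyMeasurable_circleEnergy_map_smul hr).sub
        stronglyMeasurable_const).aestronglyMeasurable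
  · filter_upwards [hIco] with r hr using ae_of_all _ (abs_circleEnergy_map_smul_sub_le hr)

variable {μ : Measure SL2} [IsProbabilityMeasure μ] {ν : Measure Circle} [IsProbabilityMeasure ν]

-- Stationarity makes `circleMoment ν k` the mean over `g` of `circleMoment (ν.map (g • ·)) k`, so
-- that both sides are its variance.
lemma IsConvStationary.integral_norm_circleMoment_sub_sq (h : IsConvStationary μ ν) (k : ℕ) :
    ∫ g, ‖circleMoment (ν.map (g • ·)) k - circleMoment ν k‖ ^ 2 ∂μ =
      ∫ g, (‖circleMoment (ν.map (g • ·)) k‖ ^ 2 - ‖circleMoment ν k‖ ^ 2) ∂μ := by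
  have hmem := memLp_circleMoment_map_smul (ν := ν) μ k
  have hvar := integral_norm_sub_integral_sq hmem
  rw [h.integral_circleMoment_map_smul] at hvar
  rw [hvar, integral_sub (hmem.norm.integrable_sq) (integrable_const _), integral_const,
    probReal_univ, one_smul]

lemma abs_sq_norm_circleMoment_sub_le (g : SL2) (k : ℕ) :
    |‖circleMoment (ν.map (g • ·)) k‖ ^ 2 - ‖circleMoment ν k‖ ^ 2| ≤ 1 := by
  have hsq {ν' : Measure Circle} [IsProbabilityMeasure ν'] :
      ‖circleMoment ν' k‖ ^ 2 ∈ Set.Icc 0 1 :=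
    ⟨sq_nonneg _, pow_le_one₀ (norm_nonneg _) (norm_circleMoment_le ν' k)⟩
  exact abs_sub_le_of_nonneg_of_le (hsq (ν' := ν.map (g • ·))).1 hsq.2 hsq.1 hsq.2

lemma IsConvStationary.hasSum_integral_circleEnergy_sub (h : IsConvStationary μ ν) {r : ℝ}
    (hr : r ∈ Set.Ico 0 1) :
    HasSum (fun k : ℕ ↦
        r ^ k / k * ∫ g, ‖circleMoment (ν.map (g • ·)) k - circleMoment ν k‖ ^ 2 ∂μ)
      (∫ g, (circleEnergy r (ν.map (g • ·)) - circleEnergy r ν) ∂μ) := by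
  simp_rw [h.integral_norm_circleMoment_sub_sq]
  refine hasSum_integral_pow_div_mul hr (C := 1) (fun k ↦ ?_)
    (fun k g ↦ abs_sq_norm_circleMoment_sub_le g k) fun g ↦ ?_
  · exact (((continuous_circleMoment_map_smul k).norm.pow 2).sub
      continuous_const).aestronglyMeasurable
  · simpa only [mul_sub] using (hasSum_circleEnergy hr).sub (hasSum_circleEnergy hr)

lemma IsConvStationary.integral_norm_circleMoment_sub_sq_div_le [NullSingletonClass ν]
    (h : IsConvStationary μ ν) (hκ : Integrable kappa μ) (k : ℕ) :
    (∫ g, ‖circleMoment (ν.map (g • ·)) k - circleMoment ν k‖ ^ 2 ∂μ) / k ≤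
      2 * ∫ g, ∫ z, Real.log ‖denom g z‖ ∂ν ∂μ := by
  set m : ℕ → ℝ := fun k ↦ ∫ g, ‖circleMoment (ν.map (g • ·)) k - circleMoment ν k‖ ^ 2 ∂μ
  have hm0 (k : ℕ) : 0 ≤ m k := integral_nonneg fun g ↦ sq_nonneg _
  have hpow : Tendsto (fun r : ℝ ↦ r ^ k / k * m k) (𝓝[<] 1) (𝓝 (1 ^ k / k * m k)) :=
    (Continuous.tendsto (by fun_prop) 1).mono_left nhdsWithin_le_nhds
  have hle : ∀ᶠ r in 𝓝[<] (1 : ℝ),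
      r ^ k / k * m k ≤ ∫ g, (circleEnergy r (ν.map (g • ·)) - circleEnergy r ν) ∂μ := by
    filter_upwards [Ico_mem_nhdsLT (zero_lt_one' ℝ)] with r hr
    exact le_hasSum (h.hasSum_integral_circleEnergy_sub hr) k fun j _ ↦
      mul_nonneg (div_nonneg (pow_nonneg hr.1 j) j.cast_nonneg) (hm0 j)
  have hlim := le_of_tendsto_of_tendsto hpow (tendsto_integral_circleEnergy_sub hκ) hle
  rw [integral_const_mul, one_pow, one_div_mul_eq_div] at hlim
  exact hlim

lemma IsConvStationary.ae_map_smul_eq [NullSingletonClass ν] (h : IsConvStationary μ ν)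
    (hκ : Integrable kappa μ) (hdrift : ∫ g, ∫ z, Real.log ‖denom g z‖ ∂ν ∂μ ≤ 0) :
    ∀ᵐ g ∂μ, ν.map (g • ·) = ν := by
  have hmoment (k : ℕ) : ∀ᵐ g ∂μ, circleMoment (ν.map (g • ·)) k = circleMoment ν k := by
    rcases k.eq_zero_or_pos with rfl | hk
    · exact ae_of_all _ fun g ↦ by simp [circleMoment]
    have hint : Integrable (fun g ↦ ‖circleMoment (ν.map (g • ·)) k - circleMoment ν k‖ ^ 2) μ :=
      ((memLp_circleMoment_map_smul μ k).sub (memLp_const _)).norm.integrable_sq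
    have hzero : ∫ g, ‖circleMoment (ν.map (g • ·)) k - circleMoment ν k‖ ^ 2 ∂μ ≤ 0 := by
      have hle := (h.integral_norm_circleMoment_sub_sq_div_le hκ k).trans
        (mul_nonpos_of_nonneg_of_nonpos zero_le_two hdrift)
      rwa [div_le_iff₀ (Nat.cast_pos.2 hk), zero_mul] at hle
    have hae := (integral_eq_zero_iff_of_nonneg (fun g ↦ sq_nonneg _) hint).1
      (hzero.antisymm (integral_nonneg fun g ↦ sq_nonneg _))
    filter_upwards [hae] with g hg
    exact sub_eq_zero.1 (norm_eq_zero.1 (pow_eq_zero_iff two_ne_zero |>.1 hg))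
  filter_upwards [ae_all_iff.2 hmoment] with g hg using eq_of_circleMoment_eq hg

theorem IsConvStationary.integral_log_norm_denom_pos (h : IsConvStationary μ ν)
    (hκ : Integrable kappa μ) (hμ : ¬ Group.IsSolvable (Subgroup.closure (measSupp μ))) :
    0 < ∫ g, ∫ z, Real.log ‖denom g z‖ ∂ν ∂μ := by
  have := h.nullSingletonClass hμ
  by_contra! hdrift
  refine not_ae_measurePreserving (ν := ν) hμ ?_
  filter_upwards [h.ae_map_smul_eq hκ hdrift] with g hg
  exact ⟨(continuous_const_smul g).measurable, hg⟩

end Drift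

section Duality

variable {X : Type*} [TopologicalSpace X]

lemma convex_setOfPred_forall_pos : Convex ℝ {f : C(X, ℝ) | ∀ x, 0 < f x} := by
  intro f hf g hg a b ha hb hab x
  exact convex_Ioi (0 : ℝ) (hf x) (hg x) ha hb hab

lemma map_nonpos_of_forall_lt {f : C(X, ℝ) →ₗ[ℝ] ℝ} {u : ℝ}
    (hf : ∀ a : C(X, ℝ), (∀ x, 0 < a x) → f a < u) {a : C(X, ℝ)} (ha : ∀ x, 0 < a x) : f a ≤ 0 := by
  by_contra! hpos
  have hu : 0 < u := hpos.trans (hf a ha)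
  have hlt := hf ((u / f a) • a) fun x ↦ mul_pos (div_pos hu hpos) (ha x)
  rw [map_smul, smul_eq_mul, div_mul_cancel₀ _ hpos.ne'] at hlt
  exact hlt.false

lemma nonneg_of_forall_lt {f : C(X, ℝ) →ₗ[ℝ] ℝ} {u : ℝ}
    (hf : ∀ a : C(X, ℝ), (∀ x, 0 < a x) → f a < u) : 0 ≤ u := by
  have hlim : Tendsto (fun t : ℝ ↦ t * f 1) (𝓝[>] 0) (𝓝 (0 * f 1)) :=
    (Continuous.tendsto (by fun_prop) 0).mono_left nhdsWithin_le_nhds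
  rw [zero_mul] at hlim
  refine le_of_tendsto hlim ?_
  filter_upwards [self_mem_nhdsWithin] with t ht
  simpa using (hf (t • 1) fun x ↦ by simpa using ht).le

lemma map_nonpos_of_nonneg_of_forall_pos {f : C(X, ℝ) →ₗ[ℝ] ℝ}
    (hf : ∀ a : C(X, ℝ), (∀ x, 0 < a x) → f a ≤ 0) {a : C(X, ℝ)} (ha : ∀ x, 0 ≤ a x) : f a ≤ 0 := by
  have hlim : Tendsto (fun t : ℝ ↦ f a + t * f 1) (𝓝[>] 0) (𝓝 (f a + 0 * f 1)) :=
    (Continuous.tendsto (by fun_prop) 0).mono_left nhdsWithin_le_nhds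
  rw [zero_mul, add_zero] at hlim
  refine le_of_tendsto hlim ?_
  filter_upwards [self_mem_nhdsWithin] with t ht
  simpa using hf (a + t • 1) fun x ↦ by simpa using add_pos_of_nonneg_of_pos (ha x) ht

variable [CompactSpace X]

lemma isOpen_setOfPred_forall_pos : IsOpen {f : C(X, ℝ) | ∀ x, 0 < f x} := by
  simpa [Set.MapsTo] using
    ContinuousMap.isOpen_setOfPred_mapsTo (isCompact_univ (X := X)) (isOpen_Ioi (a := (0 : ℝ)))

lemma exists_positive_linearMap_forall_nonpos {T : Set C(X, ℝ)} (hT : Convex ℝ T)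
    (hne : T.Nonempty) (hpos : ∀ f ∈ T, ∃ x, f x ≤ 0) :
    ∃ L : C(X, ℝ) →ₗ[ℝ] ℝ, (∀ f : C(X, ℝ), (∀ x, 0 ≤ f x) → 0 ≤ L f) ∧ L 1 = 1 ∧
      ∀ f ∈ T, L f ≤ 0 := by
  have hdisj : Disjoint {f : C(X, ℝ) | ∀ x, 0 < f x} T := Set.disjoint_left.2 fun f hf hfT ↦
    let ⟨x, hx⟩ := hpos f hfT
    hx.not_gt (hf x)
  obtain ⟨f, u, hfu, hfT⟩ :=
    geometric_hahn_banach_open convex_setOfPred_forall_pos isOpen_setOfPred_forall_pos hT hdisj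
  have hf1 : f 1 < 0 := by
    obtain ⟨b, hb⟩ := hne
    have hlt := hfu (b + (‖b‖ + 1) • 1) fun x ↦ by
      have := neg_le_of_abs_le (b.norm_coe_le_norm x)
      simp only [ContinuousMap.add_apply, ContinuousMap.smul_apply, ContinuousMap.one_apply,
        smul_eq_mul, mul_one]
      linarith
    rw [map_add, map_smul, smul_eq_mul] at hlt
    exact neg_of_mul_neg_right (by linarith [hfT b hb]) (by positivity : 0 ≤ ‖b‖ + 1)
  have hu : 0 ≤ u := nonneg_of_forall_lt (f := f.toLinearMap) fun a ha ↦ hfu a ha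
  have hneg {a : C(X, ℝ)} (ha : ∀ x, 0 ≤ a x) : f a ≤ 0 :=
    map_nonpos_of_nonneg_of_forall_pos (f := f.toLinearMap)
      (fun _ ↦ map_nonpos_of_forall_lt fun a ha ↦ hfu a ha) ha
  have hinv : (f 1)⁻¹ ≤ 0 := inv_nonpos.2 hf1.le
  exact ⟨(f 1)⁻¹ • f, fun a ha ↦ mul_nonneg_of_nonpos_of_nonpos hinv (hneg ha),
    inv_mul_cancel₀ hf1.ne, fun b hb ↦ mul_nonpos_of_nonpos_of_nonneg hinv (hu.trans (hfT b hb))⟩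

variable [T2Space X] [MeasurableSpace X] [BorelSpace X]

lemma exists_isProbabilityMeasure_integral_eq (L : C(X, ℝ) →ₗ[ℝ] ℝ)
    (hpos : ∀ f : C(X, ℝ), (∀ x, 0 ≤ f x) → 0 ≤ L f) (hone : L 1 = 1) :
    ∃ ν : Measure X, IsProbabilityMeasure ν ∧ ∀ f : C(X, ℝ), ∫ x, f x ∂ν = L f := by
  let Λ : CompactlySupportedContinuousMap X ℝ →ₗ[ℝ] ℝ :=
    { toFun := fun f ↦ L f.toContinuousMap
      map_add' := fun f g ↦ map_add L f.toContinuousMap g.toContinuousMap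
      map_smul' := fun c f ↦ map_smul L c f.toContinuousMap }
  set ν := RealRMK.rieszMeasure (PositiveLinearMap.mk₀ Λ fun f hf ↦ hpos _ hf)
  have hν (f : C(X, ℝ)) : ∫ x, f x ∂ν = L f :=
    RealRMK.integral_rieszMeasure _ (CompactlySupportedContinuousMap.continuousMapEquiv f)
  refine ⟨ν, ⟨?_⟩, hν⟩
  have hmass : ν.real Set.univ = 1 := by simpa [hone] using hν 1
  exact (ENNReal.toReal_eq_one_iff _).1 hmass

theorem exists_mem_forall_pos_add {V : Submodule ℝ C(X, ℝ)} {φ : C(X, ℝ)}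
    (h : ∀ ν : Measure X, IsProbabilityMeasure ν → (∀ f ∈ V, ∫ x, f x ∂ν = 0) →
      0 < ∫ x, φ x ∂ν) :
    ∃ f ∈ V, ∀ x, 0 < φ x + f x := by
  by_contra! hnot
  obtain ⟨L, hpos, hone, hL⟩ := exists_positive_linearMap_forall_nonpos
    (V.convex.translate φ) ⟨φ, 0, V.zero_mem, add_zero φ⟩
    (by rintro _ ⟨f, hf, rfl⟩; exact hnot f hf)
  have hLV (f) (hf : f ∈ V) (t : ℝ) : L φ + t * L f ≤ 0 := by
    simpa using hL _ ⟨t • f, V.smul_mem t hf, rfl⟩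
  obtain ⟨ν, hν, hint⟩ := exists_isProbabilityMeasure_integral_eq L hpos hone
  refine (h ν hν fun f hf ↦ ?_).not_ge ?_
  · rw [hint]
    by_contra hne
    have := hLV f hf ((1 - L φ) / L f)
    rw [div_mul_cancel₀ _ hne] at this
    linarith
  · simpa [hint] using hLV 0 V.zero_mem 0

end Duality

section MarkovOperator

variable {G X : Type*} [SMul G X] [TopologicalSpace G] [TopologicalSpace X] [ContinuousSMul G X]
  [CompactSpace X] [MeasurableSpace G] [OpensMeasurableSpace G]

lemma integrable_comp_smul (μ : Measure G) [IsFiniteMeasure μ] (f : C(X, ℝ)) (x : X) :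
    Integrable (fun g : G ↦ f (g • x)) μ :=
  .of_bound (f.continuous.comp (continuous_id.smul continuous_const)).aestronglyMeasurable ‖f‖
    (ae_of_all _ fun _ ↦ f.norm_coe_le_norm _)

/-- The Markov operator `f ↦ (x ↦ ∫ f (g • x) dμ(g))` of `μ` on continuous functions. -/
def markovOp [FirstCountableTopology X] (μ : Measure G) [IsFiniteMeasure μ] :
    C(X, ℝ) →ₗ[ℝ] C(X, ℝ) where
  toFun f :=
    { toFun := fun x ↦ ∫ g, f (g • x) ∂μ
      continuous_toFun := continuous_of_dominated
        (fun x ↦ (integrable_comp_smul μ f x).aestronglyMeasurable)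
        (fun _ ↦ ae_of_all _ fun _ ↦ f.norm_coe_le_norm _) (integrable_const ‖f‖)
        (ae_of_all _ fun _ ↦ f.continuous.comp (continuous_const.smul continuous_id)) }
  map_add' f g := ContinuousMap.ext fun x ↦
    integral_add (integrable_comp_smul μ f x) (integrable_comp_smul μ g x)
  map_smul' c f := ContinuousMap.ext fun x ↦ integral_const_mul c fun g ↦ f (g • x)

lemma markovOp_apply [FirstCountableTopology X] (μ : Measure G) [IsFiniteMeasure μ] (f : C(X, ℝ))
    (x : X) : markovOp μ f x = ∫ g, f (g • x) ∂μ :=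
  rfl

lemma isConvStationary_of_forall_integral_markovOp_eq [SecondCountableTopology X]
    [MeasurableSpace X] [BorelSpace X] [HasOuterApproxClosed X] {μ : Measure G} {ν : Measure X}
    [IsFiniteMeasure μ] [IsFiniteMeasure ν]
    (h : ∀ f : C(X, ℝ), ∫ x, markovOp μ f x ∂ν = ∫ x, f x ∂ν) : IsConvStationary μ ν := by
  have hsmul : Continuous fun p : G × X ↦ p.1 • p.2 := continuous_smul
  refine ⟨hsmul.measurable, ext_of_forall_integral_eq_of_IsFiniteMeasure fun f ↦ ?_⟩
  have hint : Integrable (fun p : G × X ↦ f (p.1 • p.2)) (μ.prod ν) :=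
    .of_bound (f.continuous.comp hsmul).aestronglyMeasurable ‖f‖
      (ae_of_all _ fun _ ↦ f.norm_coe_le_norm _)
  rw [integral_map hsmul.measurable.aemeasurable f.continuous.aestronglyMeasurable,
    integral_prod_symm _ hint]
  exact h f.toContinuousMap

end MarkovOperator

section TwistedCocycle

/-- The cocycle cohomologous to `log ‖denom g z‖` through the transfer function `A`. -/
def twistedCocycle (A : C(Circle, ℝ)) (g : SL2) (z : Circle) : ℝ :=
  Real.log ‖denom g z‖ + A (g • z) - A z

lemma twistedCocycle_mul (A : C(Circle, ℝ)) (g h : SL2) (z : Circle) :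
    twistedCocycle A (g * h) z = twistedCocycle A g (h • z) + twistedCocycle A h z := by
  simp only [twistedCocycle, log_norm_denom_mul, mul_smul]
  ring

lemma abs_twistedCocycle_sub_log_norm_denom_le (A : C(Circle, ℝ)) (g : SL2) (z : Circle) :
    |twistedCocycle A g z - Real.log ‖denom g z‖| ≤ 2 * ‖A‖ := by
  have hA := abs_le.1 (A.norm_coe_le_norm (g • z))
  have hA' := abs_le.1 (A.norm_coe_le_norm z)
  rw [twistedCocycle, abs_le]
  constructor <;> linarith [hA.1, hA.2, hA'.1, hA'.2]

lemma abs_twistedCocycle_le (A : C(Circle, ℝ)) (g : SL2) (z : Circle) :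
    |twistedCocycle A g z| ≤ kappa g + 2 * ‖A‖ := by
  have htri := abs_add_le (Real.log ‖denom g z‖) (twistedCocycle A g z - Real.log ‖denom g z‖)
  rw [add_sub_cancel] at htri
  linarith [abs_log_norm_denom_le g z, abs_twistedCocycle_sub_log_norm_denom_le A g z]

lemma continuous_log_norm_denom_left (z : Circle) :
    Continuous fun g : SL2 ↦ Real.log ‖denom g z‖ := by
  have hcomp := continuous_log_norm_denom.comp (Continuous.prodMk_left z)
  exact hcomp

lemma continuous_twistedCocycle_left (A : C(Circle, ℝ)) (z : Circle) :
    Continuous fun g ↦ twistedCocycle A g z :=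
  ((continuous_log_norm_denom_left z).add
    (A.continuous.comp (continuous_id.smul continuous_const))).sub continuous_const

variable {μ : Measure SL2}

lemma integrable_log_norm_denom_left (hκ : Integrable kappa μ) (z : Circle) :
    Integrable (fun g ↦ Real.log ‖denom g z‖) μ :=
  hκ.mono' (continuous_log_norm_denom_left z).aestronglyMeasurable
    (ae_of_all _ fun g ↦ abs_log_norm_denom_le g z)

lemma integrable_log_norm_denom (hκ : Integrable kappa μ) (ν : Measure Circle)
    [IsFiniteMeasure ν] [SFinite μ] :
    Integrable (fun p : SL2 × Circle ↦ Real.log ‖denom p.1 p.2‖) (μ.prod ν) :=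
  (hκ.comp_fst ν).mono' continuous_log_norm_denom.aestronglyMeasurable
    (ae_of_all _ fun p ↦ abs_log_norm_denom_le p.1 p.2)

lemma continuous_integral_log_norm_denom (hκ : Integrable kappa μ) :
    Continuous fun z ↦ ∫ g, Real.log ‖denom g z‖ ∂μ :=
  continuous_of_dominated (fun z ↦ (integrable_log_norm_denom_left hκ z).aestronglyMeasurable)
    (fun z ↦ ae_of_all _ fun g ↦ abs_log_norm_denom_le g z) hκ
    (ae_of_all _ continuous_log_norm_denom_right)

variable [IsProbabilityMeasure μ]

lemma integral_twistedCocycle (hκ : Integrable kappa μ) (A : C(Circle, ℝ)) (z : Circle) :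
    ∫ g, twistedCocycle A g z ∂μ =
      ∫ g, Real.log ‖denom g z‖ ∂μ + (markovOp μ A z - A z) := by
  have hlog := integrable_log_norm_denom_left hκ z
  have hA := integrable_comp_smul μ A z
  have hsum : Integrable (fun g ↦ Real.log ‖denom g z‖ + A (g • z)) μ := hlog.add hA
  simp only [twistedCocycle]
  rw [integral_sub hsum (integrable_const _), integral_add hlog hA, integral_const,
    probReal_univ, one_smul, markovOp_apply, add_sub_assoc]

lemma exists_forall_integral_twistedCocycle_pos (hκ : Integrable kappa μ)
    (hμ : ¬ Group.IsSolvable (Subgroup.closure (measSupp μ))) :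
    ∃ A : C(Circle, ℝ), ∀ z, 0 < ∫ g, twistedCocycle A g z ∂μ := by
  let φ : C(Circle, ℝ) := ⟨_, continuous_integral_log_norm_denom hκ⟩
  let V : Submodule ℝ C(Circle, ℝ) := LinearMap.range (markovOp μ - LinearMap.id)
  suffices hdual : ∀ ν : Measure Circle, IsProbabilityMeasure ν → (∀ f ∈ V, ∫ z, f z ∂ν = 0) →
      0 < ∫ z, φ z ∂ν by
    obtain ⟨_, ⟨A, rfl⟩, hA⟩ := exists_mem_forall_pos_add hdual
    exact ⟨A, fun z ↦ (hA z).trans_eq (integral_twistedCocycle hκ A z).symm⟩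
  intro ν hν hV
  have hstat : IsConvStationary μ ν := isConvStationary_of_forall_integral_markovOp_eq fun f ↦ by
    rw [← sub_eq_zero, ← integral_sub (integrable_of_continuous (markovOp μ f).continuous)
      (integrable_of_continuous f.continuous)]
    exact hV _ ⟨f, rfl⟩
  have hpos := hstat.integral_log_norm_denom_pos hκ hμ
  rwa [integral_integral_swap (integrable_log_norm_denom hκ ν)] at hpos

theorem exists_forall_le_integral_twistedCocycle (hκ : Integrable kappa μ)
    (hμ : ¬ Group.IsSolvable (Subgroup.closure (measSupp μ))) :
    ∃ A : C(Circle, ℝ), ∃ c > 0, ∀ z, c ≤ ∫ g, twistedCocycle A g z ∂μ := by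
  obtain ⟨A, hA⟩ := exists_forall_integral_twistedCocycle_pos hκ hμ
  have hcont : Continuous fun z ↦ ∫ g, twistedCocycle A g z ∂μ := by
    simp_rw [integral_twistedCocycle hκ]
    exact (continuous_integral_log_norm_denom hκ).add
      ((markovOp μ A).continuous.sub A.continuous)
  obtain ⟨c, hc, hle⟩ :=
    isCompact_univ.exists_forall_le' hcont.continuousOn fun z _ ↦ hA z
  exact ⟨A, c, hc, fun z ↦ hle z trivial⟩

end TwistedCocycle

section ExponentialMoments

lemma exp_le_one_add_add_sq_mul_exp_abs (x : ℝ) :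
    Real.exp x ≤ 1 + x + x ^ 2 * Real.exp |x| := by
  have h := Complex.norm_exp_sub_sum_le_norm_mul_exp (x : ℂ) 2
  have hreal : Complex.exp x - ∑ m ∈ Finset.range 2, (x : ℂ) ^ m / m.factorial =
      ((Real.exp x - (1 + x) : ℝ) : ℂ) := by
    simp [Finset.sum_range_succ]
  rw [hreal, Complex.norm_real, Complex.norm_real, Real.norm_eq_abs, Real.norm_eq_abs, sq_abs] at h
  linarith [(abs_le.1 h).2]

lemma sq_mul_exp_le {ε δ y : ℝ} (hε : 0 < ε) (hδ : δ ≤ ε / 2) (hy : 0 ≤ y) :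
    y ^ 2 * Real.exp (δ * y) ≤ 8 / ε ^ 2 * Real.exp (ε * y) := by
  have hquad : (ε * y / 2) ^ 2 / 2 ≤ Real.exp (ε * y / 2) := by
    have := Real.quadratic_le_exp_of_nonneg (x := ε * y / 2) (by positivity)
    linarith [mul_nonneg hε.le hy]
  have hsq : y ^ 2 ≤ 8 / ε ^ 2 * Real.exp (ε * y / 2) := by
    rw [div_mul_eq_mul_div, le_div_iff₀ (by positivity)]
    linarith
  calc y ^ 2 * Real.exp (δ * y)
      ≤ 8 / ε ^ 2 * Real.exp (ε * y / 2) * Real.exp (ε / 2 * y) := by gcongr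
    _ = 8 / ε ^ 2 * Real.exp (ε * y) := by
        rw [mul_assoc, ← Real.exp_add]
        ring_nf

lemma exp_neg_mul_le {ε δ x y : ℝ} (hε : 0 < ε) (hδ : δ ∈ Set.Icc 0 (ε / 2)) (hxy : |x| ≤ y) :
    Real.exp (-(δ * x)) ≤ 1 - δ * x + δ ^ 2 * (8 / ε ^ 2 * Real.exp (ε * y)) := by
  have hδ0 := hδ.1
  have hy : 0 ≤ y := (abs_nonneg x).trans hxy
  calc Real.exp (-(δ * x))
      ≤ 1 + -(δ * x) + (-(δ * x)) ^ 2 * Real.exp |-(δ * x)| :=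
        exp_le_one_add_add_sq_mul_exp_abs _
    _ = 1 - δ * x + δ ^ 2 * (|x| ^ 2 * Real.exp (δ * |x|)) := by
        rw [abs_neg, abs_mul, abs_of_nonneg hδ0, sq_abs]
        ring
    _ ≤ 1 - δ * x + δ ^ 2 * (y ^ 2 * Real.exp (δ * y)) := by gcongr
    _ ≤ _ := by
        gcongr _ + _ * ?_
        exact sq_mul_exp_le hε hδ.2 hy

variable {Ω : Type*} [MeasurableSpace Ω] {μ : Measure Ω} [IsProbabilityMeasure μ] {Y : Ω → ℝ}
  {ε c : ℝ}

lemma lintegral_exp_neg_mul_le {X : Ω → ℝ} {δ : ℝ} (hε : 0 < ε) (hδ : δ ∈ Set.Icc 0 (ε / 2))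
    (hX : Integrable X μ) (hXY : ∀ ω, |X ω| ≤ Y ω)
    (hY : Integrable (fun ω ↦ Real.exp (ε * Y ω)) μ) :
    ∫⁻ ω, ENNReal.ofReal (Real.exp (-(δ * X ω))) ∂μ ≤ ENNReal.ofReal
      (1 - δ * ∫ ω, X ω ∂μ + δ ^ 2 * (8 / ε ^ 2 * ∫ ω, Real.exp (ε * Y ω) ∂μ)) := by
  have hle (ω : Ω) := exp_neg_mul_le hε hδ (hXY ω)
  have hlin : Integrable (fun ω ↦ 1 - δ * X ω) μ := (integrable_const _).sub (hX.const_mul δ)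
  have hquad : Integrable (fun ω ↦ δ ^ 2 * (8 / ε ^ 2 * Real.exp (ε * Y ω))) μ :=
    (hY.const_mul _).const_mul _
  have hmean : ∫ ω, (1 - δ * X ω + δ ^ 2 * (8 / ε ^ 2 * Real.exp (ε * Y ω))) ∂μ =
      1 - δ * ∫ ω, X ω ∂μ + δ ^ 2 * (8 / ε ^ 2 * ∫ ω, Real.exp (ε * Y ω) ∂μ) := by
    rw [integral_add hlin hquad, integral_sub (integrable_const _) (hX.const_mul δ),
      integral_const, probReal_univ, one_smul, integral_const_mul, integral_const_mul,
      integral_const_mul]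
  have hsum : Integrable
      (fun ω ↦ 1 - δ * X ω + δ ^ 2 * (8 / ε ^ 2 * Real.exp (ε * Y ω))) μ := hlin.add hquad
  rw [← hmean, ofReal_integral_eq_lintegral_ofReal hsum
    (ae_of_all _ fun ω ↦ (Real.exp_pos _).le.trans (hle ω))]
  exact lintegral_mono fun ω ↦ ENNReal.ofReal_le_ofReal (hle ω)

theorem exists_forall_lintegral_exp_neg_mul_le {ι : Type*} {X : ι → Ω → ℝ} (hε : 0 < ε)
    (hc : 0 < c) (hX : ∀ i, Integrable (X i) μ) (hXY : ∀ i ω, |X i ω| ≤ Y ω)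
    (hY : Integrable (fun ω ↦ Real.exp (ε * Y ω)) μ) (hmean : ∀ i, c ≤ ∫ ω, X i ω ∂μ) :
    ∃ δ > 0, ∃ ρ < 1, ∀ i, ∫⁻ ω, ENNReal.ofReal (Real.exp (-(δ * X i ω))) ∂μ ≤ ρ := by
  set M := 8 / ε ^ 2 * ∫ ω, Real.exp (ε * Y ω) ∂μ
  have hM : 0 ≤ M := mul_nonneg (by positivity) (integral_nonneg fun ω ↦ (Real.exp_pos _).le)
  set δ := min (ε / 2) (c / (2 * (M + 1)))
  have hδ : 0 < δ := lt_min (half_pos hε) (div_pos hc (by linarith))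
  have hδM : δ * (2 * (M + 1)) ≤ c := (le_div_iff₀ (by linarith)).1 (min_le_right _ _)
  refine ⟨δ, hδ, ENNReal.ofReal (1 - δ * c / 2), ?_, fun i ↦ ?_⟩
  · rw [ENNReal.ofReal_lt_one]
    linarith [mul_pos hδ hc]
  · refine (lintegral_exp_neg_mul_le hε ⟨hδ.le, min_le_left _ _⟩ (hX i) (hXY i) hY).trans
      (ENNReal.ofReal_le_ofReal ?_)
    nlinarith [mul_le_mul_of_nonneg_left (hmean i) hδ.le, mul_le_mul_of_nonneg_left hδM hδ.le]

end ExponentialMoments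

section Contraction

variable {μ : Measure SL2} {ε : ℝ}

lemma HasExpMoment.exists_integrable_exp_mul_kappa (h : HasExpMoment μ) :
    ∃ ε > 0, Integrable (fun g ↦ Real.exp (ε * kappa g)) μ := by
  obtain ⟨ε, hε, hfin⟩ := h
  have hrpow (g : SL2) : opNorm g ^ ε = Real.exp (ε * kappa g) := by
    rw [Real.rpow_def_of_pos (opNorm_pos g), mul_comm, kappa]
  simp_rw [hrpow] at hfin
  exact ⟨ε, hε, (lintegral_ofReal_ne_top_iff_integrable
    (continuous_kappa.const_mul ε).rexp.aestronglyMeasurable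
    (ae_of_all _ fun g ↦ (Real.exp_pos _).le)).1 hfin.ne⟩

lemma integrable_kappa_of_integrable_exp (hε : 0 < ε)
    (h : Integrable (fun g ↦ Real.exp (ε * kappa g)) μ) : Integrable kappa μ := by
  refine (h.div_const ε).mono' continuous_kappa.aestronglyMeasurable (ae_of_all _ fun g ↦ ?_)
  rw [Real.norm_of_nonneg (kappa_nonneg g), le_div_iff₀' hε]
  linarith [Real.add_one_le_exp (ε * kappa g)]

theorem exists_lintegral_exp_neg_twistedCocycle_le [IsProbabilityMeasure μ] (hmom : HasExpMoment μ)
    (hμ : ¬ Group.IsSolvable (Subgroup.closure (measSupp μ))) :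
    ∃ A : C(Circle, ℝ), ∃ δ > 0, ∃ ρ < 1, ∀ z,
      ∫⁻ g, ENNReal.ofReal (Real.exp (-(δ * twistedCocycle A g z))) ∂μ ≤ ρ := by
  obtain ⟨ε, hε, hexp⟩ := hmom.exists_integrable_exp_mul_kappa
  have hκ := integrable_kappa_of_integrable_exp hε hexp
  obtain ⟨A, c, hc, hA⟩ := exists_forall_le_integral_twistedCocycle hκ hμ
  refine ⟨A, exists_forall_lintegral_exp_neg_mul_le hε hc (fun z ↦ ?_)
    (fun z g ↦ abs_twistedCocycle_le A g z) ?_ hA⟩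
  · exact (hκ.add (integrable_const _)).mono'
      (continuous_twistedCocycle_left A z).aestronglyMeasurable
      (ae_of_all _ fun g ↦ abs_twistedCocycle_le A g z)
  · simpa only [mul_add, Real.exp_add] using hexp.mul_const (Real.exp (ε * (2 * ‖A‖)))

end Contraction

section RandomWalk

variable {G : Type*} [Monoid G] [MeasurableSpace G]

/-- The transition operator of the left random walk on `G` with step distribution `μ`. -/
def walkOp (μ : Measure G) (f : G → ℝ≥0∞) (x : G) : ℝ≥0∞ := ∫⁻ h, f (h * x) ∂μ

/-- The probability that the left random walk started at `x` enters `S` at its first step. -/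
def entryProb (μ : Measure G) (S : Set G) (x : G) : ℝ≥0∞ := μ {h | x ∉ S ∧ h * x ∈ S}

lemma entryProb_of_mem (μ : Measure G) {S : Set G} {x : G} (hx : x ∈ S) : entryProb μ S x = 0 := by
  simp [entryProb, hx]

variable [MeasurableMul₂ G] {μ : Measure G} {S : Set G}

lemma measurable_walkOp [SFinite μ] {f : G → ℝ≥0∞} (hf : Measurable f) :
    Measurable (walkOp μ f) :=
  (hf.comp measurable_mul).lintegral_prod_left'

lemma measurable_walkOp_iterate [SFinite μ] {f : G → ℝ≥0∞} (hf : Measurable f) :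
    ∀ n, Measurable ((walkOp μ)^[n] f)
  | 0 => hf
  | n + 1 => measurable_walkOp_iterate (measurable_walkOp hf) n

lemma measurable_list_prod_ofFn (n : ℕ) :
    Measurable fun g : Fin n → G ↦ (List.ofFn g).prod := by
  induction n with
  | zero => simp
  | succ n ih =>
    simp only [List.ofFn_succ, List.prod_cons]
    exact (measurable_pi_apply 0).mul
      (ih.comp (measurable_pi_lambda _ fun i ↦ measurable_pi_apply i.succ))

lemma lintegral_pi_list_prod_ofFn_mul [IsProbabilityMeasure μ] (x : G) (n : ℕ) {f : G → ℝ≥0∞}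
    (hf : Measurable f) :
    ∫⁻ g : Fin n → G, f ((List.ofFn g).prod * x) ∂(Measure.pi fun _ ↦ μ) =
      (walkOp μ)^[n] f x := by
  induction n generalizing f with
  | zero => simp
  | succ n ih =>
    have hmeas : Measurable fun p : G × (Fin n → G) ↦ f (p.1 * (List.ofFn p.2).prod * x) :=
      hf.comp ((measurable_fst.mul
        ((measurable_list_prod_ofFn n).comp measurable_snd)).mul_const x)
    have hcons :=
      (measurePreserving_piFinSuccAbove (fun _ : Fin (n + 1) ↦ μ) 0).lintegral_comp hmeas
    rw [Function.iterate_succ_apply, ← ih (measurable_walkOp hf)]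
    simp only [walkOp, ← mul_assoc]
    rw [← lintegral_prod_symm _ hmeas.aemeasurable, ← hcons]
    simp only [List.ofFn_succ, List.prod_cons]
    rfl

lemma measurableSet_entry (hS : MeasurableSet S) :
    MeasurableSet {p : G × G | p.2 ∉ S ∧ p.1 * p.2 ∈ S} :=
  (measurable_snd hS.compl).inter (measurable_mul hS)

lemma measurable_entryProb [SFinite μ] (hS : MeasurableSet S) : Measurable (entryProb μ S) :=
  measurable_measure_prodMk_right (measurableSet_entry hS)

lemma prod_pi_entry_eq_walkOp_iterate [IsProbabilityMeasure μ] (hS : MeasurableSet S) (n : ℕ) :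
    (μ.prod (Measure.pi fun _ : Fin n ↦ μ))
      {p | (List.ofFn p.2).prod ∉ S ∧ p.1 * (List.ofFn p.2).prod ∈ S} =
      (walkOp μ)^[n] (entryProb μ S) 1 := by
  have hmeas : Measurable fun p : G × (Fin n → G) ↦ (p.1, (List.ofFn p.2).prod) :=
    measurable_fst.prodMk ((measurable_list_prod_ofFn n).comp measurable_snd)
  refine (Measure.prod_apply_symm (hmeas (measurableSet_entry hS))).trans ?_
  rw [← lintegral_pi_list_prod_ofFn_mul 1 n (measurable_entryProb hS)]
  simp only [mul_one]
  rfl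

lemma walkOp_iterate_le {F b : G → ℝ≥0∞} {r : ℝ≥0∞} (hF : Measurable F)
    (hFr : ∀ x, walkOp μ F x ≤ r * F x) (hb : ∀ x, b x ≤ F x) (n : ℕ) (x : G) :
    (walkOp μ)^[n] b x ≤ r ^ n * F x := by
  induction n generalizing x with
  | zero => simpa using hb x
  | succ n ih =>
    rw [Function.iterate_succ_apply']
    calc ∫⁻ h, (walkOp μ)^[n] b (h * x) ∂μ
        ≤ ∫⁻ h, r ^ n * F (h * x) ∂μ := lintegral_mono fun h ↦ ih (h * x)
      _ = r ^ n * walkOp μ F x := lintegral_const_mul _ (hF.comp (measurable_mul_const x))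
      _ ≤ r ^ n * (r * F x) := by gcongr; exact hFr x
      _ = r ^ (n + 1) * F x := by ring

lemma tsum_walkOp_iterate_le {F b : G → ℝ≥0∞} {r : ℝ≥0∞} (hF : Measurable F)
    (hFr : ∀ x, walkOp μ F x ≤ r * F x) (hb : ∀ x, b x ≤ F x) (x : G) :
    ∑' n, (walkOp μ)^[n] b x ≤ (1 - r)⁻¹ * F x := by
  rw [← ENNReal.tsum_geometric, ← ENNReal.tsum_mul_right]
  exact ENNReal.tsum_le_tsum fun n ↦ walkOp_iterate_le hF hFr hb n x

lemma sum_range_succ_walkOp_iterate [SFinite μ] {b : G → ℝ≥0∞} (hb : Measurable b) (N : ℕ)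
    (x : G) :
    ∑ n ∈ Finset.range (N + 1), (walkOp μ)^[n] b x =
      b x + ∫⁻ h, ∑ n ∈ Finset.range N, (walkOp μ)^[n] b (h * x) ∂μ := by
  have hmeas (n : ℕ) : Measurable fun h ↦ (walkOp μ)^[n] b (h * x) :=
    (measurable_walkOp_iterate hb n).comp (measurable_mul_const x)
  rw [Finset.sum_range_succ', add_comm, lintegral_finsetSum _ fun n _ ↦ hmeas n]
  simp only [Function.iterate_succ_apply', Function.iterate_zero, id_eq, walkOp]

-- The maximum principle: a walk started outside `S` accumulates nothing before it enters `S`.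
lemma sum_walkOp_iterate_entryProb_le [IsProbabilityMeasure μ] (hS : MeasurableSet S) {K : ℝ≥0∞}
    (hK : ∀ x ∈ S, ∀ N, ∑ n ∈ Finset.range N, (walkOp μ)^[n] (entryProb μ S) x ≤ K) (N : ℕ)
    (x : G) : ∑ n ∈ Finset.range N, (walkOp μ)^[n] (entryProb μ S) x ≤ 1 + K := by
  induction N generalizing x with
  | zero => simp
  | succ N ih =>
    by_cases hx : x ∈ S
    · exact (hK x hx _).trans le_add_self
    have hSx : MeasurableSet {h | h * x ∈ S} := measurable_mul_const x hS
    have hentry : entryProb μ S x = ∫⁻ h, {h | h * x ∈ S}.indicator 1 h ∂μ := by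
      simp [entryProb, hx, lintegral_indicator_one hSx]
    rw [sum_range_succ_walkOp_iterate (measurable_entryProb hS), hentry,
      ← lintegral_add_left (measurable_one.indicator hSx)]
    calc _ ≤ ∫⁻ _, (1 + K) ∂μ := lintegral_mono fun h ↦ ?_
      _ = 1 + K := by simp
    by_cases hh : h * x ∈ S
    · simpa [hh] using hK _ hh N
    · simpa [hh] using ih (h * x)

theorem tsum_walkOp_iterate_entryProb_le [IsProbabilityMeasure μ] (hS : MeasurableSet S)
    {r c : ℝ≥0∞} (hF : ∀ x ∈ S, ∃ F : G → ℝ≥0∞, Measurable F ∧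
      (∀ y, walkOp μ F y ≤ r * F y) ∧ (∀ y ∉ S, 1 ≤ F y) ∧ F x ≤ c) (x : G) :
    ∑' n, (walkOp μ)^[n] (entryProb μ S) x ≤ 1 + (1 - r)⁻¹ * c := by
  refine ENNReal.tsum_le_of_sum_range_le fun N ↦ sum_walkOp_iterate_entryProb_le hS ?_ N x
  intro x hx N
  obtain ⟨F, hmeas, hFr, hone, hFc⟩ := hF x hx
  have hb (y : G) : entryProb μ S y ≤ F y := by
    by_cases hy : y ∈ S
    · simp [entryProb_of_mem μ hy]
    · exact prob_le_one.trans (hone y hy)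
  exact (ENNReal.sum_le_tsum _).trans <| (tsum_walkOp_iterate_le hmeas hFr hb x).trans (by gcongr)

end RandomWalk

section Lyapunov

/-- The Lyapunov function `y ↦ exp (δ (s - twistedCocycle A y z))` of the random walk. -/
def lyapunov (A : C(Circle, ℝ)) (δ s : ℝ) (z : Circle) (y : SL2) : ℝ≥0∞ :=
  ENNReal.ofReal (Real.exp (δ * (s - twistedCocycle A y z)))

variable {A : C(Circle, ℝ)} {δ : ℝ}

lemma measurable_lyapunov (A : C(Circle, ℝ)) (δ s : ℝ) (z : Circle) :
    Measurable (lyapunov A δ s z) :=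
  ((continuous_const.sub (continuous_twistedCocycle_left A z)).const_mul
    δ).rexp.measurable.ennreal_ofReal

lemma lyapunov_mul (A : C(Circle, ℝ)) (δ s : ℝ) (z : Circle) (h y : SL2) :
    lyapunov A δ s z (h * y) =
      ENNReal.ofReal (Real.exp (-(δ * twistedCocycle A h (y • z)))) * lyapunov A δ s z y := by
  rw [lyapunov, lyapunov, ← ENNReal.ofReal_mul (Real.exp_pos _).le, ← Real.exp_add,
    twistedCocycle_mul]
  ring_nf

lemma walkOp_lyapunov_le {μ : Measure SL2} {ρ : ℝ≥0∞}
    (hρ : ∀ z, ∫⁻ g, ENNReal.ofReal (Real.exp (-(δ * twistedCocycle A g z))) ∂μ ≤ ρ)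
    (s : ℝ) (z : Circle) (y : SL2) :
    walkOp μ (lyapunov A δ s z) y ≤ ρ * lyapunov A δ s z y := by
  have hfin : lyapunov A δ s z y ≠ ⊤ := ENNReal.ofReal_ne_top
  simp_rw [walkOp, lyapunov_mul]
  rw [lintegral_mul_const' _ _ hfin]
  gcongr
  exact hρ _

lemma one_le_lyapunov (hδ : 0 ≤ δ) {t : ℝ} {y : SL2} (hy : kappa y ≤ t) (z : Circle) :
    1 ≤ lyapunov A δ (t + 2 * ‖A‖) z y := by
  have hlog := (abs_le.1 (abs_log_norm_denom_le y z)).2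
  have htwist := (abs_le.1 (abs_twistedCocycle_sub_log_norm_denom_le A y z)).2
  exact ENNReal.one_le_ofReal.2 (Real.one_le_exp (mul_nonneg hδ (by linarith)))

lemma exists_lyapunov_le (hδ : 0 ≤ δ) {t : ℝ} {x : SL2} (hx : t ≤ kappa x) :
    ∃ z, lyapunov A δ (t + 2 * ‖A‖) z x ≤ ENNReal.ofReal (Real.exp (δ * (4 * ‖A‖))) := by
  obtain ⟨z, hz⟩ := exists_norm_denom_eq_opNorm x
  have htwist := (abs_le.1 (abs_twistedCocycle_sub_log_norm_denom_le A x z)).1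
  rw [hz, ← kappa] at htwist
  refine ⟨z, ENNReal.ofReal_le_ofReal (Real.exp_le_exp.2 (mul_le_mul_of_nonneg_left ?_ hδ))⟩
  linarith

end Lyapunov

theorem passage_set_measure_bounded
    (μ : Measure SL2) [IsProbabilityMeasure μ]
    (hmom : HasExpMoment μ) (hzd : ZariskiDense μ) :
    ∃ C > (0 : ℝ), ∀ t : ℝ,
      (∑' n : ℕ, (μ.prod (μpi μ n)) {p : SL2 × (Fin n → SL2) |
          kappa (word p.2) < t ∧ t ≤ kappa (p.1 * word p.2)}) ≤
        ENNReal.ofReal C := by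
  obtain ⟨A, δ, hδ, ρ, hρ, hcontr⟩ := exists_lintegral_exp_neg_twistedCocycle_le hmom hzd
  set K := (1 - ρ)⁻¹ * ENNReal.ofReal (Real.exp (δ * (4 * ‖A‖)))
  have hK : K ≠ ⊤ := ENNReal.mul_ne_top (ENNReal.inv_ne_top.2 (tsub_pos_of_lt hρ).ne')
    ENNReal.ofReal_ne_top
  refine ⟨1 + K.toReal, by positivity, fun t ↦ ?_⟩
  have hS : MeasurableSet {g : SL2 | t ≤ kappa g} :=
    measurableSet_le measurable_const continuous_kappa.measurable
  have hpass (n : ℕ) := prod_pi_entry_eq_walkOp_iterate (μ := μ) hS n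
  simp only [Set.mem_ofPred_eq, not_le] at hpass
  rw [ENNReal.ofReal_add zero_le_one ENNReal.toReal_nonneg, ENNReal.ofReal_one,
    ENNReal.ofReal_toReal hK]
  refine (ENNReal.tsum_le_tsum fun n ↦ (hpass n).le).trans
    (tsum_walkOp_iterate_entryProb_le hS (fun x hx ↦ ?_) 1)
  obtain ⟨z, hz⟩ := exists_lyapunov_le (A := A) hδ.le hx
  exact ⟨_, measurable_lyapunov A δ _ z, walkOp_lyapunov_le hcontr _ z,
    fun y hy ↦ one_le_lyapunov hδ.le (not_le.1 hy).le z, hz⟩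

end
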